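/- arXiv:2505.19072 — 3 statements merged into one kernel-verified Lean document; each statement's English description precedes it below -/
import Mathlib

section
/- Let T be a benign 12-SV table of shape λ/μ and let k be a descent of T. Then: (1) res_k(T) is again a benign 12-SV table with ceq(res_k(T)) = ceq(T), ex(res_k(T)) = ex(T), and ircont(res_k(T)) = ircont(T); (2) k is a descent of flip(res_k(T)), and res_k(flip(res_k(T))) = flip(T); (3) ℓ(T) > ℓ(res_k(T)). -/
open scoped Classical

/-- A partition, given as its weakly decreasing sequence of parts (0-indexed),
with finitely many nonzero parts. -/
def IsPartitionFun (f : ℕ → ℕ) : Prop :=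
  (∀ i, f (i + 1) ≤ f i) ∧ ∃ N, ∀ i, N ≤ i → f i = 0

/-- Box `(i, j)` (row `i`, column `j`, both 0-indexed) lies in the skew shape `lam/mu`. -/
def InShape (lam mu : ℕ → ℕ) (i j : ℕ) : Prop :=
  mu i ≤ j ∧ j < lam i

/-- `A ≤ B` for finite sets of naturals: every element of `A` is at most every
element of `B` (for nonempty sets this says `max A ≤ min B`). -/
def FinsetLE (A B : Finset ℕ) : Prop :=
  ∀ a ∈ A, ∀ b ∈ B, a ≤ b

/-- A set-valued reverse plane partition of skew shape `lam/mu`: every box of the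
shape is filled with a nonempty finite set of positive integers, the sets weakly
increase along rows and down columns, and boxes outside the shape are empty. -/
def IsSVRPP (lam mu : ℕ → ℕ) (T : ℕ → ℕ → Finset ℕ) : Prop :=
  (∀ i j, ¬ InShape lam mu i j → T i j = ∅) ∧
  (∀ i j, InShape lam mu i j → (T i j).Nonempty) ∧
  (∀ i j x, x ∈ T i j → 1 ≤ x) ∧
  (∀ i j, InShape lam mu i j → InShape lam mu i (j + 1) → FinsetLE (T i j) (T i (j + 1))) ∧
  (∀ i j, InShape lam mu i j → InShape lam mu (i + 1) j → FinsetLE (T i j) (T (i + 1) j))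

/-- An SVRPP all of whose entries are subsets of `{1, …, n}`. -/
def IsSVRPPn (lam mu : ℕ → ℕ) (n : ℕ) (T : ℕ → ℕ → Finset ℕ) : Prop :=
  IsSVRPP lam mu T ∧ ∀ i j, T i j ⊆ Finset.Icc 1 n

/-- `ircont T v` = number of columns of `T` containing a set that contains `v`. -/
noncomputable def ircont (T : ℕ → ℕ → Finset ℕ) (v : ℕ) : ℕ :=
  Set.ncard {j : ℕ | ∃ i, v ∈ T i j}

/-- `ceq lam mu T i` = number of boxes `(i,j)` of the shape with `(i+1,j)` also in the
shape and `max T(i,j) = min T(i+1,j)`. -/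
noncomputable def ceq (lam mu : ℕ → ℕ) (T : ℕ → ℕ → Finset ℕ) (i : ℕ) : ℕ :=
  Set.ncard {j : ℕ | InShape lam mu i j ∧ InShape lam mu (i + 1) j ∧
    ∃ m, m ∈ T i j ∧ (∀ x ∈ T i j, x ≤ m) ∧ m ∈ T (i + 1) j ∧ ∀ x ∈ T (i + 1) j, m ≤ x}

/-- `exv lam mu T i` = excess of row `i`: the sum over the boxes of row `i` of
(cardinality of the filling minus one). -/
def exv (lam mu : ℕ → ℕ) (T : ℕ → ℕ → Finset ℕ) (i : ℕ) : ℕ :=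
  ∑ j ∈ Finset.Ico (mu i) (lam i), ((T i j).card - 1)

/-! ### Two-letter fillings (letters `a` and `a+1`) and descent resolution -/

/-- Column `j` of the filling `S` contains the letter `x` somewhere. -/
def ColHas (S : ℕ → ℕ → Finset ℕ) (j x : ℕ) : Prop := ∃ r, x ∈ S r j

/-- Column `j` is `a`-pure: it contains the letter `a` but not the letter `a+1`. -/
def ColPureA (a : ℕ) (S : ℕ → ℕ → Finset ℕ) (j : ℕ) : Prop :=
  ColHas S j a ∧ ¬ ColHas S j (a + 1)

/-- Column `j` is `(a+1)`-pure: it contains the letter `a+1` but not the letter `a`. -/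
def ColPureB (a : ℕ) (S : ℕ → ℕ → Finset ℕ) (j : ℕ) : Prop :=
  ColHas S j (a + 1) ∧ ¬ ColHas S j a

/-- Column `j` is mixed: it contains both letters `a` and `a+1`. -/
def ColMixed (a : ℕ) (S : ℕ → ℕ → Finset ℕ) (j : ℕ) : Prop :=
  ColHas S j a ∧ ColHas S j (a + 1)

/-- `sep a S j`: the smallest row index `r` with `a+1 ∈ S r j` (the transition row of a
mixed column). -/
noncomputable def sep (a : ℕ) (S : ℕ → ℕ → Finset ℕ) (j : ℕ) : ℕ :=
  sInf {r : ℕ | a + 1 ∈ S r j}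

/-- `botA a S j`: the largest row index `r` with `a ∈ S r j` (the bottom-most box of
column `j` containing the letter `a`). -/
noncomputable def botA (a : ℕ) (S : ℕ → ℕ → Finset ℕ) (j : ℕ) : ℕ :=
  sSup {r : ℕ | a ∈ S r j}

/-- `k` is a descent of `S`: in some row, a box whose maximum is `a+1` lies immediately
to the left of a box whose minimum is `a`. -/
def Descent (a : ℕ) (S : ℕ → ℕ → Finset ℕ) (k : ℕ) : Prop :=
  ∃ r, a + 1 ∈ S r k ∧ a ∈ S r (k + 1)

/-- The flip map: each entry of every `a`-pure column is replaced by `{a+1}`, each entry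
of every `(a+1)`-pure column is replaced by `{a}`, and mixed columns stay unchanged. -/
noncomputable def flipT (a : ℕ) (S : ℕ → ℕ → Finset ℕ) : ℕ → ℕ → Finset ℕ :=
  fun r j =>
    if ColPureA a S j then (S r j).image (fun _ => a + 1)
    else if ColPureB a S j then (S r j).image (fun _ => a)
    else S r j

/-- The descent-resolution operation `res_k` at columns `k, k+1`, implementing the
(M1), (2M) and (21) moves (with `a, a+1` playing the roles of `1, 2`). -/
noncomputable def resFun (a : ℕ) (S : ℕ → ℕ → Finset ℕ) (k : ℕ) : ℕ → ℕ → Finset ℕ :=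
  fun r j =>
    if ColMixed a S k ∧ ColPureA a S (k + 1) then
      -- (M1): the transition row is `sep a S k`, the transition entry is `S (sep a S k) k`.
      (if j = k then (S r j).image (fun _ => a)
       else if j = k + 1 then
         (if (S r j).Nonempty then
            (if r < sep a S k then {a}
             else if r = sep a S k then S r k
             else {a + 1})
          else ∅)
       else S r j)
    else if ColPureB a S k ∧ ColMixed a S (k + 1) then
      -- (2M): the transition row is `botA a S (k+1)`, the transition entry is
      -- `S (botA a S (k+1)) (k+1)`.
      (if j = k then
         (if (S r j).Nonempty then
            (if r < botA a S (k + 1) then {a}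
             else if r = botA a S (k + 1) then S r (k + 1)
             else {a + 1})
          else ∅)
       else if j = k + 1 then (S r j).image (fun _ => a + 1)
       else S r j)
    else if ColPureB a S k ∧ ColPureA a S (k + 1) then
      -- (21): the two columns swap purities.
      (if j = k then (S r j).image (fun _ => a)
       else if j = k + 1 then (S r j).image (fun _ => a + 1)
       else S r j)
    else S r j

/-- One descent-resolution step: `ResStep a S S'` holds when `S' = res_k S` for some
descent `k` of `S`. -/
def ResStep (a : ℕ) (S S' : ℕ → ℕ → Finset ℕ) : Prop :=
  ∃ k, Descent a S k ∧ S' = resFun a S k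

/-! ### 12-SV tables of a skew shape -/

/-- A 12-SV table of shape `lam/mu`: every box of the shape is filled with a nonempty
subset of `{1,2}`, columns weakly increase, rows are unconstrained, and boxes outside
the shape are empty. -/
def Is12SVTable (lam mu : ℕ → ℕ) (T : ℕ → ℕ → Finset ℕ) : Prop :=
  (∀ i j, ¬ InShape lam mu i j → T i j = ∅) ∧
  (∀ i j, InShape lam mu i j → (T i j).Nonempty ∧ T i j ⊆ ({1, 2} : Finset ℕ)) ∧
  (∀ i j, InShape lam mu i j → InShape lam mu (i + 1) j → FinsetLE (T i j) (T (i + 1) j))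

/-- A 12-SV table is benign if over consecutive mixed columns `k < k'` the `sep` values
weakly decrease, strictly so whenever column `k'` contains a box filled with `{1,2}`. -/
def Benign (T : ℕ → ℕ → Finset ℕ) : Prop :=
  ∀ k k', k < k' → ColMixed 1 T k → ColMixed 1 T k' →
    (∀ m, k < m → m < k' → ¬ ColMixed 1 T m) →
    sep 1 T k' ≤ sep 1 T k ∧
    ((∃ i, T i k' = ({1, 2} : Finset ℕ)) → sep 1 T k' < sep 1 T k)

/-- The signature of column `j`: `0` for an empty or `(a+1)`-pure column, `1` for a mixed
column, `2` for an `a`-pure column. -/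
noncomputable def sig (a : ℕ) (S : ℕ → ℕ → Finset ℕ) (j : ℕ) : ℕ :=
  if ColPureA a S j then 2 else if ColMixed a S j then 1 else 0

/-- `ℓ(S) = Σ_{j ≥ 1} j · sig(column j)`, columns being `1`-indexed (internally the
`0`-indexed column `j` has position `j + 1`). -/
noncomputable def ellStat (a : ℕ) (S : ℕ → ℕ → Finset ℕ) : ℕ :=
  ∑ᶠ j : ℕ, (j + 1) * sig a S j

/-!
The columns of a 12-SV table are monotone words in `1`, `{1, 2}` and `2`, so a column is determined
by its type: 1-pure, 2-pure, or mixed with a given transition. On the sequence of column types,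
`res_k` just exchanges the types in positions `k` and `k + 1`, and flip reverses the order of the
weights that types have in `ℓ`. A descent of a benign table is an adjacent pair of columns with
weights in the wrong order: the exchange sorts it, which lowers `ℓ`, and flipping both columns
afterwards restores the wrong order, so that a second exchange undoes the first.
-/

section Shape

variable {lam mu : ℕ → ℕ} {i i' m j : ℕ}

theorem InShape.of_le_of_le (hlam : Antitone lam) (hmu : Antitone mu) (h : InShape lam mu i j)
    (h' : InShape lam mu i' j) (him : i ≤ m) (hmi : m ≤ i') : InShape lam mu m j :=
  ⟨(hmu him).trans h.1, h'.2.trans_le (hlam hmi)⟩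

theorem InShape.succ_right (hlam : Antitone lam) (h : InShape lam mu i j)
    (h' : InShape lam mu i' (j + 1)) (hi : i ≤ i') : InShape lam mu i (j + 1) :=
  ⟨h.1.trans j.le_succ, h'.2.trans_le (hlam hi)⟩

theorem InShape.of_succ_right (hmu : Antitone mu) (h : InShape lam mu i j)
    (h' : InShape lam mu i' (j + 1)) (hi : i ≤ i') : InShape lam mu i' j :=
  ⟨(hmu hi).trans h.1, j.lt_succ_self.trans h'.2⟩

end Shape

/-- The content of a column of a 12-SV table, irrespective of which boxes the column has:
1-pure, 2-pure, or mixed with bottom-most `1` in row `s` and top-most `2` in row `r`. The box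
`{1, 2}` occurs exactly when `s = r`. -/
inductive ColumnType
  | ones
  | twos
  | mixed (s r : ℕ)

namespace ColumnType

/-- The filling that a column of the given type has in row `i`. -/
def entry (i : ℕ) : ColumnType → Finset ℕ
  | ones => {1}
  | twos => {2}
  | mixed s r => (if i ≤ s then {1} else ∅) ∪ (if r ≤ i then {2} else ∅)

/-- The letters that occur in a nonempty column of the given type. -/
def letters : ColumnType → Finset ℕ
  | ones => {1}
  | twos => {2}
  | mixed _ _ => {1, 2}

/-- The weight in `ℓ` of a nonempty column of the given type. -/
def weight : ColumnType → ℕ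
  | ones => 2
  | twos => 0
  | mixed _ _ => 1

/-- The effect of the flip map on column types. -/
def flip : ColumnType → ColumnType
  | ones => twos
  | twos => ones
  | mixed s r => mixed s r

/-- The column type can be realised in column `j` of `lam/mu`: for a mixed type, the rows `s` and
`r` are equal or consecutive and both have a box in that column. An empty column can be given
either pure type. -/
def Fits (lam mu : ℕ → ℕ) (j : ℕ) : ColumnType → Prop
  | ones => True
  | twos => True
  | mixed s r => s ≤ r ∧ r ≤ s + 1 ∧ InShape lam mu s j ∧ InShape lam mu r j

variable {lam mu : ℕ → ℕ} {c d : ColumnType} {i j : ℕ}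

theorem entry_subset (c : ColumnType) (i : ℕ) : c.entry i ⊆ {1, 2} := by
  cases c <;> grind [entry]

theorem one_mem_entry_iff : 1 ∈ c.entry i ↔ c = ones ∨ ∃ s r, c = mixed s r ∧ i ≤ s := by
  cases c <;> grind [entry]

theorem two_mem_entry_iff : 2 ∈ c.entry i ↔ c = twos ∨ ∃ s r, c = mixed s r ∧ r ≤ i := by
  cases c <;> grind [entry]

theorem entry_nonempty (hc : c.Fits lam mu j) : (c.entry i).Nonempty := by
  cases c with
  | ones => exact Finset.singleton_nonempty 1
  | twos => exact Finset.singleton_nonempty 2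
  | mixed s r =>
    obtain hi | hi : i ≤ s ∨ r ≤ i := by have := hc.2.1; omega
    · exact ⟨1, by simp [entry, hi]⟩
    · exact ⟨2, by simp [entry, hi]⟩

theorem entry_le_entry_succ (hc : c.Fits lam mu j) : FinsetLE (c.entry i) (c.entry (i + 1)) := by
  intro a ha b hb
  cases c <;> grind [entry, Fits]

theorem entry_eq_pair_iff (hc : c.Fits lam mu j) : c.entry i = {1, 2} ↔ c = mixed i i := by
  have h1 : ({1} : Finset ℕ) ≠ {1, 2} := by decide
  have h2 : ({2} : Finset ℕ) ≠ {1, 2} := by decide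
  cases c with
  | ones => simp [entry, h1]
  | twos => simp [entry, h2]
  | mixed s r =>
    simp only [Fits] at hc
    simp only [entry, mixed.injEq]
    grind

theorem card_entry_sub_one (hc : c.Fits lam mu j) :
    (c.entry i).card - 1 = if c = mixed i i then 1 else 0 := by
  cases c with
  | ones => simp [entry]
  | twos => simp [entry]
  | mixed s r =>
    simp only [Fits] at hc
    simp only [entry, mixed.injEq]
    split_ifs <;> first | rfl | omega

theorem entry_mixed_eq_ite_two {s r : ℕ} (h : (mixed s r).Fits lam mu j) :
    (mixed s r).entry i =
      if i < r then {1} else if i = r then (mixed s r).entry r else {2} := by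
  grind [entry, Fits]

theorem entry_mixed_eq_ite_one {s r : ℕ} (h : (mixed s r).Fits lam mu j) :
    (mixed s r).entry i =
      if i < s then {1} else if i = s then (mixed s r).entry s else {2} := by
  grind [entry, Fits]

theorem exists_max_eq_min_entry_iff (hc : c.Fits lam mu j) :
    (∃ m ∈ c.entry i, (∀ x ∈ c.entry i, x ≤ m) ∧ m ∈ c.entry (i + 1) ∧
      ∀ x ∈ c.entry (i + 1), m ≤ x) ↔ c ≠ mixed i (i + 1) := by
  cases c with
  | ones => simp [entry]
  | twos => simp [entry]
  | mixed s r =>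
    constructor
    · rintro ⟨m, hm, -, hm', -⟩
      grind [entry]
    · intro hne
      simp only [Fits] at hc
      obtain his | hri : i + 1 ≤ s ∨ r ≤ i := by grind
      · exact ⟨1, by grind [entry]⟩
      · exact ⟨2, by grind [entry]⟩

theorem Fits.flip (hc : c.Fits lam mu j) : c.flip.Fits lam mu j := by
  cases c <;> exact hc

theorem flip_weight_lt_flip_weight (h : d.weight < c.weight) : c.flip.weight < d.flip.weight := by
  cases c <;> cases d <;> simp_all [weight, ColumnType.flip]

theorem weight_lt_weight_iff : c.weight < d.weight ↔ (∃ s r, c = mixed s r) ∧ d = ones ∨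
    c = twos ∧ (∃ s r, d = mixed s r) ∨ c = twos ∧ d = ones := by
  cases c <;> cases d <;> simp [weight]

theorem Fits.succ (hlam : Antitone lam) (hc : c.Fits lam mu j) (h2 : 2 ∈ c.entry i)
    (hi : InShape lam mu i (j + 1)) : c.Fits lam mu (j + 1) := by
  rcases two_mem_entry_iff.1 h2 with rfl | ⟨s, r, rfl, hri⟩
  · trivial
  · obtain ⟨hsr, hrs, hs, hr⟩ := hc
    exact ⟨hsr, hrs, hs.succ_right hlam hi (hsr.trans hri), hr.succ_right hlam hi hri⟩

theorem Fits.of_succ (hmu : Antitone mu) (hc : c.Fits lam mu (j + 1)) (h1 : 1 ∈ c.entry i)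
    (hi : InShape lam mu i j) : c.Fits lam mu j := by
  rcases one_mem_entry_iff.1 h1 with rfl | ⟨s, r, rfl, his⟩
  · trivial
  · obtain ⟨hsr, hrs, hs, hr⟩ := hc
    exact ⟨hsr, hrs, hi.of_succ_right hmu hs his, hi.of_succ_right hmu hr (his.trans hsr)⟩

end ColumnType

open ColumnType

/-- The table of shape `lam/mu` whose column `j` has type `c j`. -/
noncomputable def ofColumns (lam mu : ℕ → ℕ) (c : ℕ → ColumnType) : ℕ → ℕ → Finset ℕ :=
  fun i j => if InShape lam mu i j then (c j).entry i else ∅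

section OfColumns

variable {lam mu : ℕ → ℕ} {c : ℕ → ColumnType} {i j x : ℕ}

theorem mem_ofColumns :
    x ∈ ofColumns lam mu c i j ↔ InShape lam mu i j ∧ x ∈ (c j).entry i := by
  by_cases h : InShape lam mu i j <;> simp [ofColumns, h]

theorem is12SVTable_ofColumns (hc : ∀ j, (c j).Fits lam mu j) :
    Is12SVTable lam mu (ofColumns lam mu c) := by
  refine ⟨fun i j h => if_neg h, fun i j h => ?_, fun i j h h' => ?_⟩
  · rw [ofColumns, if_pos h]
    exact ⟨entry_nonempty (hc j), entry_subset _ _⟩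
  · rw [ofColumns, ofColumns, if_pos h, if_pos h']
    exact entry_le_entry_succ (hc j)

theorem colHas_ofColumns (hc : (c j).Fits lam mu j) :
    ColHas (ofColumns lam mu c) j x ↔ (∃ i, InShape lam mu i j) ∧ x ∈ (c j).letters := by
  simp only [ColHas, mem_ofColumns]
  cases h : c j with
  | ones => simp [entry, letters]
  | twos => simp [entry, letters]
  | mixed s r =>
    rw [h] at hc
    obtain ⟨-, -, hs, hr⟩ := hc
    simp only [entry, letters]
    grind

theorem colMixed_ofColumns (hc : (c j).Fits lam mu j) :
    ColMixed 1 (ofColumns lam mu c) j ↔ ∃ s r, c j = mixed s r := by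
  rw [ColMixed, colHas_ofColumns hc, colHas_ofColumns hc]
  cases h : c j with
  | ones => simp [letters]
  | twos => simp [letters]
  | mixed s r =>
    rw [h] at hc
    simpa [letters] using ⟨s, hc.2.2.1⟩

theorem colPureA_ofColumns (hc : (c j).Fits lam mu j) (hj : ∃ i, InShape lam mu i j) :
    ColPureA 1 (ofColumns lam mu c) j ↔ c j = ones := by
  rw [ColPureA, colHas_ofColumns hc, colHas_ofColumns hc]
  cases h : c j <;> simp [letters, hj]

theorem colPureB_ofColumns (hc : (c j).Fits lam mu j) (hj : ∃ i, InShape lam mu i j) :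
    ColPureB 1 (ofColumns lam mu c) j ↔ c j = twos := by
  rw [ColPureB, colHas_ofColumns hc, colHas_ofColumns hc]
  cases h : c j <;> simp [letters, hj]

theorem sig_ofColumns (hc : (c j).Fits lam mu j) (hj : ∃ i, InShape lam mu i j) :
    sig 1 (ofColumns lam mu c) j = (c j).weight := by
  rw [sig, colPureA_ofColumns hc hj, colMixed_ofColumns hc]
  cases h : c j <;> simp [weight]

theorem sep_ofColumns {s r : ℕ} (hc : (c j).Fits lam mu j) (h : c j = mixed s r) :
    sep 1 (ofColumns lam mu c) j = r := by
  rw [h] at hc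
  have : IsLeast {i | 2 ∈ ofColumns lam mu c i j} r := by
    refine ⟨mem_ofColumns.2 ⟨hc.2.2.2, by simp [h, entry]⟩, fun i hi => ?_⟩
    have := (mem_ofColumns.1 hi).2
    grind [entry]
  exact this.csInf_eq

theorem botA_ofColumns {s r : ℕ} (hc : (c j).Fits lam mu j) (h : c j = mixed s r) :
    botA 1 (ofColumns lam mu c) j = s := by
  rw [h] at hc
  have : IsGreatest {i | 1 ∈ ofColumns lam mu c i j} s := by
    refine ⟨mem_ofColumns.2 ⟨hc.2.2.1, by simp [h, entry]⟩, fun i hi => ?_⟩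
    have := (mem_ofColumns.1 hi).2
    grind [entry]
  exact this.csSup_eq

theorem flipT_ofColumns (hc : ∀ j, (c j).Fits lam mu j) :
    flipT 1 (ofColumns lam mu c) = ofColumns lam mu fun j => (c j).flip := by
  funext i j
  by_cases hi : InShape lam mu i j
  · simp only [flipT, colPureA_ofColumns (hc j) ⟨i, hi⟩, colPureB_ofColumns (hc j) ⟨i, hi⟩,
      ofColumns, if_pos hi, Finset.image_const (entry_nonempty (hc j))]
    cases h : c j <;> simp [entry, ColumnType.flip]
  · simp [flipT, ofColumns, hi]

end OfColumns

section Encoding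

variable {lam mu : ℕ → ℕ} {T : ℕ → ℕ → Finset ℕ} {i i' j x y : ℕ}

theorem Is12SVTable.inShape (hT : Is12SVTable lam mu T) (hx : x ∈ T i j) : InShape lam mu i j := by
  by_contra h
  simp [hT.1 i j h] at hx

theorem Is12SVTable.eq_one_or_eq_two (hT : Is12SVTable lam mu T) (hx : x ∈ T i j) :
    x = 1 ∨ x = 2 := by
  simpa using (hT.2.1 i j (hT.inShape hx)).2 hx

theorem Is12SVTable.one_mem_or_two_mem (hT : Is12SVTable lam mu T) (h : InShape lam mu i j) :
    1 ∈ T i j ∨ 2 ∈ T i j := by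
  obtain ⟨x, hx⟩ := (hT.2.1 i j h).1
  rcases hT.eq_one_or_eq_two hx with rfl | rfl
  exacts [Or.inl hx, Or.inr hx]

theorem Is12SVTable.le_of_lt (hlam : Antitone lam) (hmu : Antitone mu)
    (hT : Is12SVTable lam mu T) (h : i < i') (hx : x ∈ T i j) (hy : y ∈ T i' j) : x ≤ y := by
  induction i', h using Nat.le_induction generalizing y with
  | base => exact hT.2.2 i j (hT.inShape hx) (hT.inShape hy) x hx y hy
  | succ m him ih =>
    have hm : InShape lam mu m j :=
      (hT.inShape hx).of_le_of_le hlam hmu (hT.inShape hy) (Nat.le_of_succ_le him) m.le_succ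
    obtain ⟨z, hz⟩ := (hT.2.1 m j hm).1
    exact (ih hz).trans (hT.2.2 m j hm (hT.inShape hy) z hz y hy)

theorem Is12SVTable.exists_mixed (hlam : Antitone lam) (hmu : Antitone mu)
    (hT : Is12SVTable lam mu T) (h1 : ColHas T j 1) (h2 : ColHas T j 2) :
    ∃ s r, (mixed s r).Fits lam mu j ∧ ∀ i, InShape lam mu i j → T i j = (mixed s r).entry i := by
  have hle : ∀ i i', 1 ∈ T i j → 2 ∈ T i' j → i ≤ i' := fun i i' hi hi' => by
    by_contra! hlt
    exact absurd (hT.le_of_lt hlam hmu hlt hi' hi) (by norm_num)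
  obtain ⟨t, ht⟩ := h2
  obtain ⟨s, hs, hs_max⟩ :=
    BddAbove.exists_isGreatest_of_nonempty (S := {i | 1 ∈ T i j}) ⟨t, fun i hi => hle i t hi ht⟩ h1
  obtain ⟨r, hr, hr_min⟩ :=
    BddBelow.exists_isLeast_of_nonempty (S := {i | 2 ∈ T i j}) (OrderBot.bddBelow _) ⟨t, ht⟩
  have hsr : s ≤ r := hle s r hs hr
  have hcover : ∀ i, InShape lam mu i j → i ≤ s ∨ r ≤ i := fun i hi =>
    (hT.one_mem_or_two_mem hi).imp (fun h => hs_max h) (fun h => hr_min h)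
  have hrs : r ≤ s + 1 := by
    by_contra! hlt
    have := hcover (s + 1) ((hT.inShape hs).of_le_of_le hlam hmu (hT.inShape hr) (by omega) hlt.le)
    omega
  have hone : ∀ i, InShape lam mu i j → (1 ∈ T i j ↔ i ≤ s) := fun i hi =>
    ⟨fun h => hs_max h, fun h => (hT.one_mem_or_two_mem hi).elim id fun h2 => by
      rwa [le_antisymm h (hsr.trans (hr_min h2))]⟩
  have htwo : ∀ i, InShape lam mu i j → (2 ∈ T i j ↔ r ≤ i) := fun i hi =>
    ⟨fun h => hr_min h, fun h => (hT.one_mem_or_two_mem hi).elim (fun h1 => by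
      rwa [le_antisymm ((hs_max h1).trans hsr) h]) id⟩
  refine ⟨s, r, ⟨hsr, hrs, hT.inShape hs, hT.inShape hr⟩, fun i hi => ?_⟩
  ext x
  have := @Is12SVTable.eq_one_or_eq_two _ _ _ i j x hT
  grind [entry]

theorem Is12SVTable.exists_columnType (hlam : Antitone lam) (hmu : Antitone mu)
    (hT : Is12SVTable lam mu T) (j : ℕ) :
    ∃ c : ColumnType, c.Fits lam mu j ∧ ∀ i, InShape lam mu i j → T i j = c.entry i := by
  by_cases h1 : ColHas T j 1
  · by_cases h2 : ColHas T j 2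
    · obtain ⟨s, r, h⟩ := hT.exists_mixed hlam hmu h1 h2
      exact ⟨mixed s r, h⟩
    · refine ⟨ones, trivial, fun i hi => ?_⟩
      refine (hT.2.1 i j hi).1.subset_singleton_iff.1 fun x hx => ?_
      rcases hT.eq_one_or_eq_two hx with rfl | rfl
      exacts [Finset.mem_singleton_self 1, (h2 ⟨i, hx⟩).elim]
  · refine ⟨twos, trivial, fun i hi => ?_⟩
    refine (hT.2.1 i j hi).1.subset_singleton_iff.1 fun x hx => ?_
    rcases hT.eq_one_or_eq_two hx with rfl | rfl
    exacts [(h1 ⟨i, hx⟩).elim, Finset.mem_singleton_self 2]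

theorem Is12SVTable.exists_eq_ofColumns (hlam : Antitone lam) (hmu : Antitone mu)
    (hT : Is12SVTable lam mu T) :
    ∃ c : ℕ → ColumnType, (∀ j, (c j).Fits lam mu j) ∧ T = ofColumns lam mu c := by
  choose c hfits hentry using hT.exists_columnType hlam hmu
  refine ⟨c, hfits, funext₂ fun i j => ?_⟩
  by_cases h : InShape lam mu i j
  · rw [ofColumns, if_pos h, hentry j i h]
  · rw [ofColumns, if_neg h, hT.1 i j h]

end Encoding

theorem rel_of_forall_consecutive {α : Type*} [Preorder α] [LocallyFiniteOrder α] {P : α → Prop}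
    {R : α → α → Prop} (trans : ∀ i m j, P m → R i m → R m j → R i j)
    (consecutive : ∀ i j, i < j → P i → P j → (∀ m, i < m → m < j → ¬ P m) → R i j)
    {i j : α} (hij : i < j) (hi : P i) (hj : P j) : R i j := by
  by_cases h : ∃ m, i < m ∧ m < j ∧ P m
  · obtain ⟨m, him, hmj, hm⟩ := h
    exact trans i m j hm (rel_of_forall_consecutive trans consecutive him hi hm)
      (rel_of_forall_consecutive trans consecutive hmj hm hj)
  · push Not at h
    exact consecutive i j hij hi hj h
termination_by (Finset.Ioo i j).card
decreasing_by
  · exact Finset.card_lt_card (Finset.ssubset_iff_of_subset (Finset.Ioo_subset_Ioo_right hmj.le)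
      |>.2 ⟨m, by simp [*]⟩)
  · exact Finset.card_lt_card (Finset.ssubset_iff_of_subset (Finset.Ioo_subset_Ioo_left him.le)
      |>.2 ⟨m, by simp [*]⟩)

/-- Of any two mixed columns, the later one has its bottom-most `1` above the top-most `2` of the
earlier one. -/
def MixedSeparated (c : ℕ → ColumnType) : Prop :=
  ∀ ⦃j j' s r s' r'⦄, j < j' → c j = mixed s r → c j' = mixed s' r' → s' < r

section Benign

variable {lam mu : ℕ → ℕ} {c : ℕ → ColumnType} {i j : ℕ}

theorem ofColumns_eq_pair_iff (hc : (c j).Fits lam mu j) :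
    ofColumns lam mu c i j = {1, 2} ↔ c j = mixed i i := by
  by_cases h : InShape lam mu i j
  · rw [ofColumns, if_pos h, entry_eq_pair_iff hc]
  · have hne : c j ≠ mixed i i := fun hci => h (by rw [hci] at hc; exact hc.2.2.1)
    simp [ofColumns, h, hne, (Finset.insert_ne_empty 1 {2}).symm]

-- Each of the two inequalities of benignity says `s' < r`: for a transition entry `{2}` one has
-- `r' = s' + 1`, and for `{1, 2}` one has `r' = s'`. In this form the relation is transitive.
theorem mixedSeparated_of_benign (hc : ∀ j, (c j).Fits lam mu j)
    (hB : Benign (ofColumns lam mu c)) : MixedSeparated c := by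
  intro j j' s r s' r' hj h h'
  refine rel_of_forall_consecutive (P := fun j => ∃ s r, c j = mixed s r)
    (R := fun j j' => ∀ s r s' r', c j = mixed s r → c j' = mixed s' r' → s' < r)
    ?_ ?_ hj ⟨s, r, h⟩ ⟨s', r', h'⟩ s r s' r' h h'
  · rintro i m j ⟨t, q, hm⟩ him hmj s r s' r' hi hj
    have hfits : (mixed t q).Fits lam mu m := hm ▸ hc m
    have htr : t < r := him s r t q hi hm
    have hs'q : s' < q := hmj t q s' r' hm hj
    have hqt : q ≤ t + 1 := hfits.2.1
    omega
  · intro j j' hj hP hP' hbetween s r s' r' h h'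
    have hfits' : (mixed s' r').Fits lam mu j' := h' ▸ hc j'
    obtain ⟨hle, hlt⟩ := hB j j' hj ((colMixed_ofColumns (hc j)).2 hP)
      ((colMixed_ofColumns (hc j')).2 hP')
      fun m h1 h2 => mt (colMixed_ofColumns (hc m)).1 (hbetween m h1 h2)
    rw [sep_ofColumns (hc j) h, sep_ofColumns (hc j') h'] at hle hlt
    obtain rfl | hne := eq_or_ne s' r'
    · exact hlt ⟨s', (ofColumns_eq_pair_iff (hc j')).2 h'⟩
    · exact (hfits'.1.lt_of_ne hne).trans_le hle

theorem MixedSeparated.benign (hS : MixedSeparated c) (hc : ∀ j, (c j).Fits lam mu j) :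
    Benign (ofColumns lam mu c) := by
  intro j j' hj hM hM' _
  obtain ⟨s, r, h⟩ := (colMixed_ofColumns (hc j)).1 hM
  obtain ⟨s', r', h'⟩ := (colMixed_ofColumns (hc j')).1 hM'
  have hfits' : (mixed s' r').Fits lam mu j' := h' ▸ hc j'
  have hlt : s' < r := hS hj h h'
  rw [sep_ofColumns (hc j) h, sep_ofColumns (hc j') h']
  refine ⟨hfits'.2.1.trans hlt, fun ⟨i, hi⟩ => ?_⟩
  obtain ⟨rfl, rfl⟩ : s' = i ∧ r' = i := by
    simpa only [h', mixed.injEq] using (ofColumns_eq_pair_iff (hc j')).1 hi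
  exact hlt

end Benign

/-- Columns `k` and `k + 1` can be resolved at `k`: their types are out of order, either column
can take over the type of the other, and they share a row. -/
structure ResolvableAt (lam mu : ℕ → ℕ) (c : ℕ → ColumnType) (k : ℕ) : Prop where
  weight_lt : (c k).weight < (c (k + 1)).weight
  fits_succ : (c k).Fits lam mu (k + 1)
  fits : (c (k + 1)).Fits lam mu k
  exists_row : ∃ i, InShape lam mu i k ∧ InShape lam mu i (k + 1)

theorem swap_apply_cases {α : Type*} [DecidableEq α] (a b x : α) :
    (x = a ∧ Equiv.swap a b x = b) ∨ (x = b ∧ Equiv.swap a b x = a) ∨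
      (x ≠ a ∧ x ≠ b ∧ Equiv.swap a b x = x) := by
  grind

theorem resFun_eq_empty {a : ℕ} {S : ℕ → ℕ → Finset ℕ} {k i j : ℕ} (h : S i j = ∅) :
    resFun a S k i j = ∅ := by
  simp [resFun, h]

section Resolution

variable {lam mu : ℕ → ℕ} {c : ℕ → ColumnType} {k i j : ℕ}

theorem resolvableAt_of_descent (hlam : Antitone lam) (hmu : Antitone mu)
    (hc : ∀ j, (c j).Fits lam mu j) (hS : MixedSeparated c)
    (hD : Descent 1 (ofColumns lam mu c) k) : ResolvableAt lam mu c k := by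
  obtain ⟨i, h2, h1⟩ := hD
  obtain ⟨hi, h2⟩ := mem_ofColumns.1 h2
  obtain ⟨hi', h1⟩ := mem_ofColumns.1 h1
  refine ⟨?_, (hc k).succ hlam h2 hi', (hc (k + 1)).of_succ hmu h1 hi, i, hi, hi'⟩
  refine weight_lt_weight_iff.2 ?_
  rcases two_mem_entry_iff.1 h2 with hk | ⟨s, r, hk, hri⟩ <;>
    rcases one_mem_entry_iff.1 h1 with hk' | ⟨s', r', hk', his⟩
  · exact Or.inr (Or.inr ⟨hk, hk'⟩)
  · exact Or.inr (Or.inl ⟨hk, s', r', hk'⟩)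
  · exact Or.inl ⟨⟨s, r, hk⟩, hk'⟩
  · exact absurd (hS k.lt_succ_self hk hk') (hri.trans his).not_gt

theorem ResolvableAt.descent (h : ResolvableAt lam mu c k) (hc : ∀ j, (c j).Fits lam mu j) :
    Descent 1 (ofColumns lam mu c) k := by
  obtain ⟨hw, hsucc, hfits, i, hi, hi'⟩ := h
  simp only [Descent, Nat.reduceAdd, mem_ofColumns, one_mem_entry_iff, two_mem_entry_iff]
  have hk_fits := hc k
  have hk'_fits := hc (k + 1)
  rcases weight_lt_weight_iff.1 hw with ⟨⟨s, r, hk⟩, hk'⟩ | ⟨hk, s, r, hk'⟩ | ⟨hk, hk'⟩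
  · rw [hk] at hk_fits hsucc
    exact ⟨r, ⟨hk_fits.2.2.2, Or.inr ⟨s, r, hk, le_rfl⟩⟩, hsucc.2.2.2, Or.inl hk'⟩
  · rw [hk'] at hk'_fits hfits
    exact ⟨s, ⟨hfits.2.2.1, Or.inl hk⟩, hk'_fits.2.2.1, Or.inr ⟨s, r, hk', le_rfl⟩⟩
  · exact ⟨i, ⟨hi, Or.inl hk⟩, hi', Or.inl hk'⟩

theorem ResolvableAt.fits_swap (h : ResolvableAt lam mu c k) (hc : ∀ j, (c j).Fits lam mu j)
    (j : ℕ) : (c (Equiv.swap k (k + 1) j)).Fits lam mu j := by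
  rcases swap_apply_cases k (k + 1) j with ⟨rfl, hj⟩ | ⟨rfl, hj⟩ | ⟨-, -, hj⟩ <;> rw [hj]
  exacts [h.fits, h.fits_succ, hc j]

theorem ResolvableAt.flip_swap (h : ResolvableAt lam mu c k) (hc : ∀ j, (c j).Fits lam mu j) :
    ResolvableAt lam mu (fun j => (c (Equiv.swap k (k + 1) j)).flip) k where
  weight_lt := by simpa using flip_weight_lt_flip_weight h.weight_lt
  fits_succ := by
    rw [Equiv.swap_apply_left]
    exact (hc (k + 1)).flip
  fits := by
    rw [Equiv.swap_apply_right]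
    exact (hc k).flip
  exists_row := h.exists_row

theorem resFun_ofColumns_of_mixed_ones (hc : ∀ j, (c j).Fits lam mu j) {s r : ℕ}
    (hk : c k = mixed s r) (hk' : c (k + 1) = ones) (hrow : ∃ i, InShape lam mu i (k + 1))
    (hij : InShape lam mu i j) :
    resFun 1 (ofColumns lam mu c) k i j = (c (Equiv.swap k (k + 1) j)).entry i := by
  have hfits : (mixed s r).Fits lam mu k := hk ▸ hc k
  have hmove : ColMixed 1 (ofColumns lam mu c) k ∧ ColPureA 1 (ofColumns lam mu c) (k + 1) :=
    ⟨(colMixed_ofColumns (hc k)).2 ⟨s, r, hk⟩, (colPureA_ofColumns (hc (k + 1)) hrow).2 hk'⟩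
  have hentry : ofColumns lam mu c r k = (mixed s r).entry r := hk ▸ if_pos hfits.2.2.2
  have hbox : ofColumns lam mu c i j = (c j).entry i := if_pos hij
  have hne : ((c j).entry i).Nonempty := entry_nonempty (hc j)
  simp only [resFun, if_pos hmove, sep_ofColumns (hc k) hk, hbox, Finset.image_const hne,
    if_pos hne]
  rcases swap_apply_cases k (k + 1) j with ⟨rfl, hj⟩ | ⟨rfl, hj⟩ | ⟨hjk, hjk', hj⟩
  · rw [if_pos rfl, hj, hk']
    rfl
  · rw [if_neg k.succ_ne_self, if_pos rfl, hj, hk, entry_mixed_eq_ite_two hfits]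
    grind
  · rw [if_neg hjk, if_neg hjk', hj]

theorem resFun_ofColumns_of_twos_mixed (hc : ∀ j, (c j).Fits lam mu j) {s r : ℕ}
    (hk : c k = twos) (hk' : c (k + 1) = mixed s r) (hrow : ∃ i, InShape lam mu i k)
    (hij : InShape lam mu i j) :
    resFun 1 (ofColumns lam mu c) k i j = (c (Equiv.swap k (k + 1) j)).entry i := by
  have hfits : (mixed s r).Fits lam mu (k + 1) := hk' ▸ hc (k + 1)
  have hmixed : ¬ ColMixed 1 (ofColumns lam mu c) k := by simp [colMixed_ofColumns (hc k), hk]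
  have hmove : ColPureB 1 (ofColumns lam mu c) k ∧ ColMixed 1 (ofColumns lam mu c) (k + 1) :=
    ⟨(colPureB_ofColumns (hc k) hrow).2 hk, (colMixed_ofColumns (hc (k + 1))).2 ⟨s, r, hk'⟩⟩
  have hentry : ofColumns lam mu c s (k + 1) = (mixed s r).entry s := hk' ▸ if_pos hfits.2.2.1
  have hbox : ofColumns lam mu c i j = (c j).entry i := if_pos hij
  have hne : ((c j).entry i).Nonempty := entry_nonempty (hc j)
  simp only [resFun, if_neg (not_and_of_not_left _ hmixed), if_pos hmove,
    botA_ofColumns (hc (k + 1)) hk', hbox, Finset.image_const hne, if_pos hne]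
  rcases swap_apply_cases k (k + 1) j with ⟨rfl, hj⟩ | ⟨rfl, hj⟩ | ⟨hjk, hjk', hj⟩
  · rw [if_pos rfl, hj, hk', entry_mixed_eq_ite_one hfits]
    grind
  · rw [if_neg k.succ_ne_self, if_pos rfl, hj, hk]
    rfl
  · rw [if_neg hjk, if_neg hjk', hj]

theorem resFun_ofColumns_of_twos_ones (hc : ∀ j, (c j).Fits lam mu j)
    (hk : c k = twos) (hk' : c (k + 1) = ones) (hrow : ∃ i, InShape lam mu i k)
    (hrow' : ∃ i, InShape lam mu i (k + 1)) (hij : InShape lam mu i j) :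
    resFun 1 (ofColumns lam mu c) k i j = (c (Equiv.swap k (k + 1) j)).entry i := by
  have hmixed : ¬ ColMixed 1 (ofColumns lam mu c) k := by simp [colMixed_ofColumns (hc k), hk]
  have hmixed' : ¬ ColMixed 1 (ofColumns lam mu c) (k + 1) := by
    simp [colMixed_ofColumns (hc (k + 1)), hk']
  have hmove : ColPureB 1 (ofColumns lam mu c) k ∧ ColPureA 1 (ofColumns lam mu c) (k + 1) :=
    ⟨(colPureB_ofColumns (hc k) hrow).2 hk, (colPureA_ofColumns (hc (k + 1)) hrow').2 hk'⟩
  have hbox : ofColumns lam mu c i j = (c j).entry i := if_pos hij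
  have hne : ((c j).entry i).Nonempty := entry_nonempty (hc j)
  simp only [resFun, if_neg (not_and_of_not_left _ hmixed), if_neg (not_and_of_not_right _ hmixed'),
    if_pos hmove, hbox, Finset.image_const hne]
  rcases swap_apply_cases k (k + 1) j with ⟨rfl, hj⟩ | ⟨rfl, hj⟩ | ⟨hjk, hjk', hj⟩
  · rw [if_pos rfl, hj, hk']
    rfl
  · rw [if_neg k.succ_ne_self, if_pos rfl, hj, hk]
    rfl
  · rw [if_neg hjk, if_neg hjk', hj]

theorem ResolvableAt.resFun_ofColumns (h : ResolvableAt lam mu c k)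
    (hc : ∀ j, (c j).Fits lam mu j) :
    resFun 1 (ofColumns lam mu c) k = ofColumns lam mu fun j => c (Equiv.swap k (k + 1) j) := by
  obtain ⟨i₀, hrow, hrow'⟩ := h.exists_row
  funext i j
  by_cases hij : InShape lam mu i j
  · rw [ofColumns, if_pos hij]
    rcases weight_lt_weight_iff.1 h.weight_lt with ⟨⟨s, r, hk⟩, hk'⟩ | ⟨hk, s, r, hk'⟩ | ⟨hk, hk'⟩
    · exact resFun_ofColumns_of_mixed_ones hc hk hk' ⟨i₀, hrow'⟩ hij
    · exact resFun_ofColumns_of_twos_mixed hc hk hk' ⟨i₀, hrow⟩ hij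
    · exact resFun_ofColumns_of_twos_ones hc hk hk' ⟨i₀, hrow⟩ ⟨i₀, hrow'⟩ hij
  · rw [ofColumns, if_neg hij, resFun_eq_empty (if_neg hij)]

theorem MixedSeparated.swap (hS : MixedSeparated c) (hk : (c k).weight < (c (k + 1)).weight) :
    MixedSeparated fun j => c (Equiv.swap k (k + 1) j) := by
  intro j j' s r s' r' hj h h'
  refine hS ?_ h h'
  by_contra! hle
  obtain ⟨rfl, rfl⟩ : j = k ∧ j' = k + 1 := by
    have := swap_apply_cases k (k + 1) j
    have := swap_apply_cases k (k + 1) j'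
    omega
  simp_all [weight]

end Resolution

section Statistics

variable {lam mu : ℕ → ℕ} {c : ℕ → ColumnType} {k : ℕ}

theorem ncard_setOf_comp_perm {α : Type*} (σ : Equiv.Perm α) (P : α → Prop) :
    {a | P (σ a)}.ncard = {a | P a}.ncard :=
  Set.ncard_preimage_of_injective_subset_range σ.injective fun a _ => σ.surjective a

theorem ceq_ofColumns (hc : ∀ j, (c j).Fits lam mu j) (i : ℕ) :
    ceq lam mu (ofColumns lam mu c) i = {j | InShape lam mu i j ∧ InShape lam mu (i + 1) j}.ncard -
      {j | c j = mixed i (i + 1)}.ncard := by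
  have hsub : {j | c j = mixed i (i + 1)} ⊆ {j | InShape lam mu i j ∧ InShape lam mu (i + 1) j} :=
    fun j hj => by
      have := hc j
      rw [hj] at this
      exact this.2.2
  have hfin : {j | InShape lam mu i j}.Finite := (Set.finite_Ico (mu i) (lam i))
  rw [← Set.ncard_sdiff hsub (hfin.subset fun j hj => (hsub hj).1)]
  unfold ceq
  congr 1
  ext j
  simp only [Set.mem_sdiff, Set.mem_ofPred_eq, and_assoc]
  refine and_congr_right fun hi => and_congr_right fun hi' => ?_
  rw [ofColumns, ofColumns, if_pos hi, if_pos hi', exists_max_eq_min_entry_iff (hc j)]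

theorem exv_ofColumns (hc : ∀ j, (c j).Fits lam mu j) (i : ℕ) :
    exv lam mu (ofColumns lam mu c) i = {j | c j = mixed i i}.ncard := by
  have hset : {j | c j = mixed i i} =
      ({j ∈ Finset.Ico (mu i) (lam i) | c j = mixed i i} : Finset ℕ) := by
    ext j
    simp only [Set.mem_ofPred_eq, Finset.coe_filter, Finset.mem_Ico, iff_and_self]
    intro hj
    have := hc j
    rw [hj] at this
    exact this.2.2.1
  rw [hset, Set.ncard_coe_finset, Finset.card_filter]
  refine Finset.sum_congr rfl fun j hj => ?_
  have hij : InShape lam mu i j := Finset.mem_Ico.1 hj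
  rw [ofColumns, if_pos hij, card_entry_sub_one (hc j)]

theorem ResolvableAt.colHas_swap_iff (h : ResolvableAt lam mu c k)
    (hc : ∀ j, (c j).Fits lam mu j) (j x : ℕ) :
    ColHas (ofColumns lam mu fun j => c (Equiv.swap k (k + 1) j)) j x ↔
      ColHas (ofColumns lam mu c) (Equiv.swap k (k + 1) j) x := by
  obtain ⟨i, hi, hi'⟩ := h.exists_row
  rw [colHas_ofColumns (h.fits_swap hc j), colHas_ofColumns (hc _)]
  refine and_congr_left fun _ => ?_
  rcases swap_apply_cases k (k + 1) j with ⟨rfl, hj⟩ | ⟨rfl, hj⟩ | ⟨-, -, hj⟩ <;> rw [hj]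
  exacts [iff_of_true ⟨i, hi⟩ ⟨i, hi'⟩, iff_of_true ⟨i, hi'⟩ ⟨i, hi⟩]

theorem ResolvableAt.sig_swap (h : ResolvableAt lam mu c k)
    (hc : ∀ j, (c j).Fits lam mu j) (j : ℕ) :
    sig 1 (ofColumns lam mu fun j => c (Equiv.swap k (k + 1) j)) j =
      sig 1 (ofColumns lam mu c) (Equiv.swap k (k + 1) j) := by
  have hcol := funext fun x => propext (h.colHas_swap_iff hc j x)
  unfold sig ColPureA ColMixed
  rw [hcol]

theorem finite_support_sig_ofColumns (hlam : Antitone lam) :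
    (Function.support (sig 1 (ofColumns lam mu c))).Finite := by
  refine (Set.finite_Iio (lam 0)).subset fun j hj => ?_
  by_contra hle
  have hempty : ∀ x, ¬ ColHas (ofColumns lam mu c) j x := fun x ⟨i, hx⟩ =>
    hle ((mem_ofColumns.1 hx).1.2.trans_le (hlam i.zero_le))
  exact hj (by simp [sig, ColPureA, ColMixed, hempty])

theorem finsum_mul_comp_swap_add {f : ℕ → ℕ} (hf : f.support.Finite) (k : ℕ) :
    ∑ᶠ j, (j + 1) * f (Equiv.swap k (k + 1) j) + f (k + 1) = ∑ᶠ j, (j + 1) * f j + f k := by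
  have hsingle : ∀ m, ∑ᶠ j, (if j = m then f j else 0) = f m := fun m => by
    rw [finsum_eq_single _ m fun j hj => if_neg hj, if_pos rfl]
  rw [← finsum_comp_equiv (Equiv.swap k (k + 1)), ← hsingle k, ← hsingle (k + 1),
    ← finsum_add_distrib, ← finsum_add_distrib]
  · refine finsum_congr fun j => ?_
    simp only [Equiv.swap_apply_self]
    rcases swap_apply_cases k (k + 1) j with ⟨rfl, hj⟩ | ⟨rfl, hj⟩ | ⟨h, h', hj⟩
    · rw [hj, if_pos rfl, if_neg (by omega)]
      ring
    · rw [hj, if_pos rfl, if_neg (by omega)]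
      ring
    · rw [hj, if_neg h, if_neg h']
  all_goals
    refine hf.subset fun j => ?_
    simp +contextual

theorem ResolvableAt.ellStat_swap_lt (h : ResolvableAt lam mu c k) (hlam : Antitone lam)
    (hc : ∀ j, (c j).Fits lam mu j) :
    ellStat 1 (ofColumns lam mu fun j => c (Equiv.swap k (k + 1) j)) <
      ellStat 1 (ofColumns lam mu c) := by
  obtain ⟨i, hi, hi'⟩ := h.exists_row
  have hadd := finsum_mul_comp_swap_add (finite_support_sig_ofColumns (mu := mu) (c := c) hlam) k
  rw [sig_ofColumns (hc k) ⟨i, hi⟩, sig_ofColumns (hc (k + 1)) ⟨i, hi'⟩] at hadd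
  have hlt := h.weight_lt
  simp only [ellStat, h.sig_swap hc]
  omega

theorem ResolvableAt.ceq_swap (h : ResolvableAt lam mu c k)
    (hc : ∀ j, (c j).Fits lam mu j) (i : ℕ) :
    ceq lam mu (ofColumns lam mu fun j => c (Equiv.swap k (k + 1) j)) i =
      ceq lam mu (ofColumns lam mu c) i := by
  rw [ceq_ofColumns (h.fits_swap hc), ceq_ofColumns hc,
    ncard_setOf_comp_perm _ fun j => c j = mixed i (i + 1)]

theorem ResolvableAt.exv_swap (h : ResolvableAt lam mu c k)
    (hc : ∀ j, (c j).Fits lam mu j) (i : ℕ) :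
    exv lam mu (ofColumns lam mu fun j => c (Equiv.swap k (k + 1) j)) i =
      exv lam mu (ofColumns lam mu c) i := by
  rw [exv_ofColumns (h.fits_swap hc), exv_ofColumns hc,
    ncard_setOf_comp_perm _ fun j => c j = mixed i i]

theorem ResolvableAt.ircont_swap (h : ResolvableAt lam mu c k)
    (hc : ∀ j, (c j).Fits lam mu j) (x : ℕ) :
    ircont (ofColumns lam mu fun j => c (Equiv.swap k (k + 1) j)) x =
      ircont (ofColumns lam mu c) x := by
  change {j | ColHas _ j x}.ncard = {j | ColHas _ j x}.ncard
  simp only [h.colHas_swap_iff hc]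
  exact ncard_setOf_comp_perm _ fun j => ColHas (ofColumns lam mu c) j x

end Statistics

theorem resolution_properties_general (lam mu : ℕ → ℕ) (hlam : Antitone lam) (hmu : Antitone mu)
    (T : ℕ → ℕ → Finset ℕ) (hT : Is12SVTable lam mu T) (hB : Benign T)
    (k : ℕ) (hk : Descent 1 T k) :
    (Is12SVTable lam mu (resFun 1 T k) ∧ Benign (resFun 1 T k) ∧
      (∀ r, ceq lam mu (resFun 1 T k) r = ceq lam mu T r) ∧
      (∀ r, exv lam mu (resFun 1 T k) r = exv lam mu T r) ∧
      (∀ v, ircont (resFun 1 T k) v = ircont T v)) ∧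
    (Descent 1 (flipT 1 (resFun 1 T k)) k ∧
      resFun 1 (flipT 1 (resFun 1 T k)) k = flipT 1 T) ∧
    ellStat 1 (resFun 1 T k) < ellStat 1 T := by
  obtain ⟨c, hc, rfl⟩ := hT.exists_eq_ofColumns hlam hmu
  have hS : MixedSeparated c := mixedSeparated_of_benign hc hB
  have hR : ResolvableAt lam mu c k := resolvableAt_of_descent hlam hmu hc hS hk
  have hc' := hR.fits_swap hc
  have hR' := hR.flip_swap hc
  rw [hR.resFun_ofColumns hc, flipT_ofColumns hc', flipT_ofColumns hc,
    hR'.resFun_ofColumns fun j => (hc' j).flip]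
  simp only [Equiv.swap_apply_self]
  exact ⟨⟨is12SVTable_ofColumns hc', (hS.swap hR.weight_lt).benign hc',
    hR.ceq_swap hc, hR.exv_swap hc, hR.ircont_swap hc⟩,
    ⟨hR'.descent fun j => (hc' j).flip, trivial⟩, hR.ellStat_swap_lt hlam hc⟩

/-- Let `T` be a benign 12-SV table of shape `lam/mu` and `k` a descent of
`T`. Then (1) `res_k T` is again a benign 12-SV table with the same `ceq`, `ex` and `ircont`
statistics; (2) `k` is a descent of `flip (res_k T)` and `res_k (flip (res_k T)) = flip T`;
(3) `ℓ(T) > ℓ(res_k T)`. -/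
theorem resolution_properties (lam mu : ℕ → ℕ)
    (hlam : IsPartitionFun lam) (hmu : IsPartitionFun mu) (hsub : ∀ r, mu r ≤ lam r)
    (T : ℕ → ℕ → Finset ℕ) (hT : Is12SVTable lam mu T) (hB : Benign T)
    (k : ℕ) (hk : Descent 1 T k) :
    (Is12SVTable lam mu (resFun 1 T k) ∧ Benign (resFun 1 T k) ∧
      (∀ r, ceq lam mu (resFun 1 T k) r = ceq lam mu T r) ∧
      (∀ r, exv lam mu (resFun 1 T k) r = exv lam mu T r) ∧
      (∀ v, ircont (resFun 1 T k) v = ircont T v)) ∧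
    (Descent 1 (flipT 1 (resFun 1 T k)) k ∧
      resFun 1 (flipT 1 (resFun 1 T k)) k = flipT 1 T) ∧
    ellStat 1 (resFun 1 T k) < ellStat 1 T :=
  resolution_properties_general lam mu (antitone_nat_of_succ_le hlam.1)
    (antitone_nat_of_succ_le hmu.1) T hT hB k hk
end

section
/- For every benign 12-SV table T of shape λ/μ, there exists a unique descent-free 12-SV table N of shape λ/μ (that is, N ∈ SVRPP^{12}(λ/μ)) such that T →* N. -/
open scoped Classical

/-!
A column of a two-letter table is either pure or determined by two rows: the bottom-most row `b`
containing `a` and the top-most row `s` containing `a + 1`. Read through these data, all three moves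
of descent resolution do the same thing: they interchange the states of two adjacent columns.
Benignity says that `b` in any mixed column is smaller than `s` in every mixed column to its left, so
two adjacent mixed columns never form a descent and each resolution sorts the two states in the order
`a`-pure, mixed, `(a + 1)`-pure. Hence the process terminates, lexicographically. Distant resolutions
commute; overlapping ones only occur on three columns that are `(a + 1)`-pure, mixed and `a`-pure,
where order-convexity of the shape lets both orders of resolution run to the reversed triple (the
braid relation). Newman's lemma finishes the proof.
-/

section Newman

open Relation

variable {α : Type*} {r : α → α → Prop}

theorem exists_normalForm (hwf : WellFounded (flip r)) (x : α) :
    ∃ n, ReflTransGen r x n ∧ ∀ m, ¬ r n m := by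
  induction x using hwf.induction with
  | _ x ih =>
    by_cases hx : ∃ y, r x y
    · obtain ⟨y, hxy⟩ := hx
      obtain ⟨n, hyn, hn⟩ := ih y hxy
      exact ⟨n, hyn.head hxy, hn⟩
    · exact ⟨x, .refl, not_exists.mp hx⟩

theorem join_reflTransGen_of_locally_confluent (hwf : WellFounded (flip r))
    (hloc : ∀ x y z, r x y → r x z → Join (ReflTransGen r) y z) (x : α) :
    ∀ y z, ReflTransGen r x y → ReflTransGen r x z → Join (ReflTransGen r) y z := by
  induction x using hwf.induction with
  | _ x ih =>
    intro y z hxy hxz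
    obtain rfl | ⟨y', hxy', hy'y⟩ := hxy.cases_head
    · exact ⟨z, hxz, .refl⟩
    obtain rfl | ⟨z', hxz', hz'z⟩ := hxz.cases_head
    · exact ⟨y, .refl, hxy⟩
    obtain ⟨u, hy'u, hz'u⟩ := hloc x y' z' hxy' hxz'
    obtain ⟨v, hyv, huv⟩ := ih y' hxy' y u hy'y hy'u
    obtain ⟨w, hvw, hzw⟩ := ih z' hxz' v z (hz'u.trans huv) hz'z
    exact ⟨w, hyv.trans hvw, hzw⟩

theorem existsUnique_normalForm (hwf : WellFounded (flip r))
    (hloc : ∀ x y z, r x y → r x z → Join (ReflTransGen r) y z) (x : α) :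
    ∃! n, ReflTransGen r x n ∧ ∀ m, ¬ r n m := by
  obtain ⟨n, hxn, hn⟩ := exists_normalForm hwf x
  refine ⟨n, ⟨hxn, hn⟩, fun m ⟨hxm, hm⟩ => ?_⟩
  obtain ⟨u, hmu, hnu⟩ := join_reflTransGen_of_locally_confluent hwf hloc x m n hxm hxn
  have eq_of_normal {p : α} (hp : ∀ q, ¬ r p q) (hpu : ReflTransGen r p u) : p = u :=
    hpu.cases_head.resolve_right fun ⟨q, hpq, _⟩ => hp q hpq
  rw [eq_of_normal hm hmu, eq_of_normal hn hnu]

end Newman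

theorem rel_of_consecutive {P : ℕ → Prop} {R : ℕ → ℕ → Prop}
    (htrans : ∀ i j k, P j → R i j → R j k → R i k)
    (hcons : ∀ i k, i < k → P i → P k → (∀ j, i < j → j < k → ¬ P j) → R i k)
    {i k : ℕ} (hik : i < k) (hi : P i) (hk : P k) : R i k := by
  by_cases h : ∃ j, i < j ∧ j < k ∧ P j
  · obtain ⟨j, hij, hjk, hj⟩ := h
    exact htrans i j k hj (rel_of_consecutive htrans hcons hij hi hj)
      (rel_of_consecutive htrans hcons hjk hj hk)
  · exact hcons i k hik hi hk fun j hij hjk hj => h ⟨j, hij, hjk, hj⟩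
termination_by k - i

theorem swap_succ_lt_swap_succ {i j : ℕ} (k : ℕ) (hij : i < j) :
    Equiv.swap k (k + 1) i < Equiv.swap k (k + 1) j ∨ i = k ∧ j = k + 1 := by
  simp only [Equiv.swap_apply_def]
  split_ifs <;> omega

theorem comp_swap_comm {α : Type*} (c : ℕ → α) {k l : ℕ} (hkl : k + 1 < l) :
    (c ∘ Equiv.swap k (k + 1)) ∘ Equiv.swap l (l + 1) =
      (c ∘ Equiv.swap l (l + 1)) ∘ Equiv.swap k (k + 1) := by
  funext j
  simp only [Function.comp_apply, Equiv.swap_apply_def]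
  grind

theorem comp_swap_braid {α : Type*} (c : ℕ → α) (k : ℕ) :
    ((c ∘ Equiv.swap k (k + 1)) ∘ Equiv.swap (k + 1) (k + 2)) ∘ Equiv.swap k (k + 1) =
      ((c ∘ Equiv.swap (k + 1) (k + 2)) ∘ Equiv.swap k (k + 1)) ∘ Equiv.swap (k + 1) (k + 2) := by
  funext j
  simp only [Function.comp_apply, Equiv.swap_apply_def]
  grind

section TwoLetterTables

/-- The type of a column of a table in the letters `a` and `a + 1`: `a`-pure, `(a + 1)`-pure, or
mixed with bottom-most `a` in row `b` and top-most `a + 1` in row `s`. A mixed column has a box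
filled with `{a, a + 1}` precisely when `b = s`. Empty columns may be given either pure state. -/
inductive ColState where
  | pureA
  | pureB
  | mixed (b s : ℕ)

namespace ColState

/-- Row `r` of a column in the given state contains the smaller letter `a`. -/
def HasA : ColState → ℕ → Prop
  | pureA, _ => True
  | pureB, _ => False
  | mixed b _, r => r ≤ b

/-- Row `r` of a column in the given state contains the larger letter `a + 1`. -/
def HasB : ColState → ℕ → Prop
  | pureA, _ => False
  | pureB, _ => True
  | mixed _ s, r => s ≤ r

/-- Position of a state in the order `a`-pure, mixed, `(a + 1)`-pure towards which resolution sorts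
the columns. -/
def rank : ColState → ℕ
  | pureA => 0
  | mixed _ _ => 1
  | pureB => 2

/-- The entry in row `r` of a column in the given state. -/
noncomputable def fill (a : ℕ) (x : ColState) (r : ℕ) : Finset ℕ :=
  (if x.HasA r then {a} else ∅) ∪ (if x.HasB r then {a + 1} else ∅)

variable {a r : ℕ}

theorem mem_fill {x : ColState} {l : ℕ} :
    l ∈ x.fill a r ↔ (l = a ∧ x.HasA r) ∨ (l = a + 1 ∧ x.HasB r) := by
  unfold fill
  split_ifs <;> simp [*]

@[simp] theorem fill_pureA : pureA.fill a r = {a} := by simp [fill, HasA, HasB]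

@[simp] theorem fill_pureB : pureB.fill a r = {a + 1} := by simp [fill, HasA, HasB]

theorem fill_mixed_of_lt {b s : ℕ} (hsb : s ≤ b + 1) (hr : r < s) :
    (mixed b s).fill a r = {a} := by
  simp [fill, HasA, HasB, show r ≤ b by omega, hr.not_ge]

theorem fill_mixed_of_gt {b s : ℕ} (hsb : s ≤ b + 1) (hr : b < r) :
    (mixed b s).fill a r = {a + 1} := by
  simp [fill, HasA, HasB, show s ≤ r by omega, hr.not_ge]

end ColState

open ColState

/-- The table of shape `D` in the letters `a` and `a + 1` whose columns have the states `c`. -/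
noncomputable def table (a : ℕ) (D : Set (ℕ × ℕ)) (c : ℕ → ColState) : ℕ → ℕ → Finset ℕ :=
  fun r j => if (r, j) ∈ D then (c j).fill a r else ∅

/-- Descents of a table in terms of its column states. -/
def IsDescent (D : Set (ℕ × ℕ)) (c : ℕ → ColState) (k : ℕ) : Prop :=
  ∃ r, (r, k) ∈ D ∧ (r, k + 1) ∈ D ∧ (c k).HasB r ∧ (c (k + 1)).HasA r

/-- The column states `c` that come from benign tables of shape `D`: the rows recorded by a mixed
state are boxes of the shape with no gap between them, and benignity makes `b` in a later column
smaller than `s` in an earlier one. -/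
structure Admissible (D : Set (ℕ × ℕ)) (c : ℕ → ColState) : Prop where
  fits : ∀ ⦃j b s⦄, c j = mixed b s → (b, j) ∈ D ∧ (s, j) ∈ D ∧ b ≤ s ∧ s ≤ b + 1
  lt : ∀ ⦃k k'⦄, k < k' → ∀ ⦃b s b' s'⦄, c k = mixed b s → c k' = mixed b' s' → b' < s

/-- Descent resolution on column states: interchange the two states at a descent. -/
def StateStep (D : Set (ℕ × ℕ)) (c d : ℕ → ColState) : Prop :=
  Admissible D c ∧ ∃ k, IsDescent D c k ∧ d = c ∘ Equiv.swap k (k + 1)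

section StateStep

variable {D : Set (ℕ × ℕ)} {c d : ℕ → ColState} {k : ℕ}

-- The three alternatives are the situations of the moves (21), (2M) and (M1).
theorem IsDescent.cases (hD : D.OrdConnected) (hc : Admissible D c) (hk : IsDescent D c k) :
    (c k = pureB ∧ c (k + 1) = pureA) ∨
    (∃ b s, c k = pureB ∧ c (k + 1) = mixed b s ∧ (b, k) ∈ D ∧ (s, k) ∈ D) ∨
    (∃ b s, c k = mixed b s ∧ c (k + 1) = pureA ∧ (b, k + 1) ∈ D ∧ (s, k + 1) ∈ D) := by
  obtain ⟨r, hrk, hrk', hB, hA⟩ := hk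
  rcases hx : c k with _ | _ | ⟨b, s⟩ <;> rcases hy : c (k + 1) with _ | _ | ⟨b', s'⟩ <;>
    simp only [hx, hy, HasA, HasB] at hA hB
  · exact .inl ⟨rfl, rfl⟩
  · obtain ⟨-, hs', hbs', -⟩ := hc.fits hy
    have mem {p : ℕ} (hp : r ≤ p) (hps : p ≤ s') : (p, k) ∈ D :=
      hD.out hrk hs' ⟨⟨hp, le_rfl⟩, ⟨hps, k.le_succ⟩⟩
    exact .inr (.inl ⟨b', s', rfl, rfl, mem hA hbs', mem (hA.trans hbs') le_rfl⟩)
  · obtain ⟨hb, -, hbs, -⟩ := hc.fits hx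
    have mem {p : ℕ} (hp : b ≤ p) (hpr : p ≤ r) : (p, k + 1) ∈ D :=
      hD.out hb hrk' ⟨⟨hp, k.le_succ⟩, ⟨hpr, le_rfl⟩⟩
    exact .inr (.inr ⟨b, s, rfl, rfl, mem le_rfl (hbs.trans hB), mem hbs hB⟩)
  · have := hc.lt k.lt_succ_self hx hy
    omega

theorem IsDescent.rank_lt (hD : D.OrdConnected) (hc : Admissible D c) (hk : IsDescent D c k) :
    (c (k + 1)).rank < (c k).rank := by
  obtain ⟨hx, hy⟩ | ⟨b, s, hx, hy, -⟩ | ⟨b, s, hx, hy, -⟩ := hk.cases hD hc <;>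
    simp [hx, hy, rank]

theorem Admissible.comp_swap (hD : D.OrdConnected) (hc : Admissible D c) (hk : IsDescent D c k) :
    Admissible D (c ∘ Equiv.swap k (k + 1)) where
  fits j b s hj := by
    rcases eq_or_ne j k with rfl | hjk
    · rw [Function.comp_apply, Equiv.swap_apply_left] at hj
      obtain ⟨-, hy⟩ | ⟨b', s', -, hy, hb, hs⟩ | ⟨_, _, -, hy, -⟩ := hk.cases hD hc <;>
        cases hj.symm.trans hy
      exact ⟨hb, hs, (hc.fits hj).2.2⟩
    rcases eq_or_ne j (k + 1) with rfl | hjk'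
    · rw [Function.comp_apply, Equiv.swap_apply_right] at hj
      obtain ⟨hx, -⟩ | ⟨_, _, hx, -⟩ | ⟨b', s', hx, -, hb, hs⟩ := hk.cases hD hc <;>
        cases hj.symm.trans hx
      exact ⟨hb, hs, (hc.fits hj).2.2⟩
    · rw [Function.comp_apply, Equiv.swap_apply_of_ne_of_ne hjk hjk'] at hj
      exact hc.fits hj
  lt i j hij b s b' s' hi hj := by
    rcases swap_succ_lt_swap_succ k hij with h | ⟨rfl, rfl⟩
    · exact hc.lt h hi hj
    · rw [Function.comp_apply, Equiv.swap_apply_left] at hi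
      rw [Function.comp_apply, Equiv.swap_apply_right] at hj
      simpa [hi, hj, rank] using hk.rank_lt hD hc

theorem StateStep.admissible (hD : D.OrdConnected) (h : StateStep D c d) : Admissible D d := by
  obtain ⟨hc, k, hk, rfl⟩ := h
  exact hc.comp_swap hD hk

theorem Admissible.of_reflTransGen (hD : D.OrdConnected) (hc : Admissible D c)
    (h : Relation.ReflTransGen (StateStep D) c d) : Admissible D d := by
  obtain rfl | ⟨e, -, hstep⟩ := h.cases_tail
  · exact hc
  · exact hstep.admissible hD

theorem wellFounded_stateStep (hD : D.OrdConnected) (hbdd : BddAbove (Prod.snd '' D)) :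
    WellFounded (flip (StateStep D)) := by
  obtain ⟨L, hL⟩ := hbdd
  refine Subrelation.wf ?_ (InvImage.wf
    (fun c : ℕ → ColState => toLex fun j : Fin (L + 1) => (c j).rank) wellFounded_lt)
  rintro _ c ⟨hc, k, hk, rfl⟩
  have hkL : k < L + 1 := by
    obtain ⟨r, hr, -⟩ := hk
    exact Nat.lt_succ_of_le (hL ⟨(r, k), hr, rfl⟩)
  refine ⟨⟨k, hkL⟩, fun i hi => ?_, ?_⟩
  · have hik : (i : ℕ) < k := hi
    simp [Equiv.swap_apply_of_ne_of_ne hik.ne (hik.trans k.lt_succ_self).ne]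
  · simpa using hk.rank_lt hD hc

theorem join_stateStep_of_succ_lt {l : ℕ} (hD : D.OrdConnected) (hc : Admissible D c)
    (hk : IsDescent D c k) (hl : IsDescent D c l) (hkl : k + 1 < l) :
    Relation.Join (Relation.ReflTransGen (StateStep D))
      (c ∘ Equiv.swap k (k + 1)) (c ∘ Equiv.swap l (l + 1)) := by
  have swap_k {j : ℕ} (hj : k + 1 < j) : Equiv.swap k (k + 1) j = j :=
    Equiv.swap_apply_of_ne_of_ne (by omega) (by omega)
  have swap_l {j : ℕ} (hj : j < l) : Equiv.swap l (l + 1) j = j :=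
    Equiv.swap_apply_of_ne_of_ne (by omega) (by omega)
  have hl' : IsDescent D (c ∘ Equiv.swap k (k + 1)) l := by
    simpa only [IsDescent, Function.comp_apply, swap_k hkl, swap_k (hkl.trans l.lt_succ_self)]
      using hl
  have hk' : IsDescent D (c ∘ Equiv.swap l (l + 1)) k := by
    simpa only [IsDescent, Function.comp_apply, swap_l hkl, swap_l (k.lt_succ_self.trans hkl)]
      using hk
  exact ⟨_, .single ⟨hc.comp_swap hD hk, l, hl', rfl⟩,
    .single ⟨hc.comp_swap hD hl, k, hk', comp_swap_comm c hkl⟩⟩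

theorem reflTransGen_comp_swap_comp_swap (hD : D.OrdConnected) {l m : ℕ} (hc : Admissible D c)
    (hk : IsDescent D c k) (hl : IsDescent D (c ∘ Equiv.swap k (k + 1)) l)
    (hm : IsDescent D ((c ∘ Equiv.swap k (k + 1)) ∘ Equiv.swap l (l + 1)) m) :
    Relation.ReflTransGen (StateStep D) (c ∘ Equiv.swap k (k + 1))
      (((c ∘ Equiv.swap k (k + 1)) ∘ Equiv.swap l (l + 1)) ∘ Equiv.swap m (m + 1)) :=
  .tail (.single ⟨hc.comp_swap hD hk, l, hl, rfl⟩)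
    ⟨(hc.comp_swap hD hk).comp_swap hD hl, m, hm, rfl⟩

theorem join_stateStep_succ (hD : D.OrdConnected) (hc : Admissible D c)
    (hk : IsDescent D c k) (hk' : IsDescent D c (k + 1)) :
    Relation.Join (Relation.ReflTransGen (StateStep D))
      (c ∘ Equiv.swap k (k + 1)) (c ∘ Equiv.swap (k + 1) (k + 2)) := by
  obtain ⟨-, hy⟩ | ⟨b, s, hx, hy, hbk, hsk⟩ | ⟨_, _, -, hy, -⟩ := hk.cases hD hc <;>
    obtain ⟨hy', -⟩ | ⟨_, _, hy', -⟩ | ⟨b', s', hy', hz, hbk', hsk'⟩ := hk'.cases hD hc <;>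
    cases hy.symm.trans hy'
  obtain ⟨hb, hs, -⟩ := hc.fits hy
  have hne : k + 2 ≠ k := by omega
  refine ⟨_, reflTransGen_comp_swap_comp_swap hD hc hk (l := k + 1) (m := k) ?_ ?_,
    comp_swap_braid c k ▸
      reflTransGen_comp_swap_comp_swap hD hc hk' (l := k) (m := k + 1) ?_ ?_⟩
  · exact ⟨s, hs, hsk', by simp [hx, HasB],
      by simp [Equiv.swap_apply_def, hne, hz, HasA]⟩
  · exact ⟨s, hsk, hs, by simp [Equiv.swap_apply_def, hne.symm, hy, HasB],
      by simp [Equiv.swap_apply_def, hne, hz, HasA]⟩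
  · exact ⟨b, hbk, hb, by simp [Equiv.swap_apply_def, hne.symm, hx, HasB], by simp [hz, HasA]⟩
  · exact ⟨b, hb, hbk', by simp [Equiv.swap_apply_def, hne.symm, hx, HasB],
      by simp [Equiv.swap_apply_def, hne, hy, HasA]⟩

theorem stateStep_locally_confluent (hD : D.OrdConnected) (c d e : ℕ → ColState)
    (hd : StateStep D c d) (he : StateStep D c e) :
    Relation.Join (Relation.ReflTransGen (StateStep D)) d e := by
  obtain ⟨hc, k, hk, rfl⟩ := hd
  obtain ⟨-, l, hl, rfl⟩ := he
  wlog hkl : k ≤ l generalizing k l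
  · obtain ⟨x, hlx, hkx⟩ := this l hl k hk (le_of_not_ge hkl)
    exact ⟨x, hkx, hlx⟩
  obtain rfl | rfl | h : k = l ∨ l = k + 1 ∨ k + 1 < l := by omega
  · exact ⟨_, .refl, .refl⟩
  · exact join_stateStep_succ hD hc hk hl
  · exact join_stateStep_of_succ_lt hD hc hk hl h

end StateStep

section Table

variable {a : ℕ} {D : Set (ℕ × ℕ)} {c : ℕ → ColState} {r j b s k : ℕ}

theorem mem_table_iff {x : ℕ} :
    x ∈ table a D c r j ↔
      (r, j) ∈ D ∧ ((x = a ∧ (c j).HasA r) ∨ (x = a + 1 ∧ (c j).HasB r)) := by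
  unfold table
  split_ifs with h <;> simp [h, mem_fill]

theorem self_mem_table_iff : a ∈ table a D c r j ↔ (r, j) ∈ D ∧ (c j).HasA r := by
  simp [mem_table_iff]

theorem succ_mem_table_iff : a + 1 ∈ table a D c r j ↔ (r, j) ∈ D ∧ (c j).HasB r := by
  simp [mem_table_iff]

theorem descent_table_iff : Descent a (table a D c) k ↔ IsDescent D c k := by
  simp only [Descent, IsDescent, self_mem_table_iff, succ_mem_table_iff]
  grind

theorem Admissible.table_nonempty_iff (hc : Admissible D c) :
    (table a D c r j).Nonempty ↔ (r, j) ∈ D := by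
  refine ⟨fun ⟨x, hx⟩ => (mem_table_iff.mp hx).1, fun h => ?_⟩
  rcases hx : c j with _ | _ | ⟨b, s⟩
  · exact ⟨a, by simp [self_mem_table_iff, h, hx, HasA]⟩
  · exact ⟨a + 1, by simp [succ_mem_table_iff, h, hx, HasB]⟩
  · have := (hc.fits hx).2.2
    rcases le_or_gt r b with hr | hr
    · exact ⟨a, by simp [self_mem_table_iff, h, hx, HasA, hr]⟩
    · exact ⟨a + 1, succ_mem_table_iff.mpr ⟨h, by simp only [hx, HasB]; omega⟩⟩

theorem Admissible.table_image_const (hc : Admissible D c) (x : ℕ) :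
    (table a D c r j).image (fun _ => x) = if (r, j) ∈ D then {x} else ∅ := by
  split_ifs with h
  · exact Finset.image_const (hc.table_nonempty_iff.mpr h) x
  · simp [table, h]

theorem colPureA_table (hr : (r, j) ∈ D) (hj : c j = pureA) : ColPureA a (table a D c) j :=
  ⟨⟨r, by simp [self_mem_table_iff, hr, hj, HasA]⟩,
    by simp [ColHas, succ_mem_table_iff, hj, HasB]⟩

theorem colPureB_table (hr : (r, j) ∈ D) (hj : c j = pureB) : ColPureB a (table a D c) j :=
  ⟨⟨r, by simp [succ_mem_table_iff, hr, hj, HasB]⟩,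
    by simp [ColHas, self_mem_table_iff, hj, HasA]⟩

theorem Admissible.colMixed_table (hc : Admissible D c) (hj : c j = mixed b s) :
    ColMixed a (table a D c) j :=
  ⟨⟨b, by simp [self_mem_table_iff, (hc.fits hj).1, hj, HasA]⟩,
    ⟨s, by simp [succ_mem_table_iff, (hc.fits hj).2.1, hj, HasB]⟩⟩

theorem Admissible.sep_table (hc : Admissible D c) (hj : c j = mixed b s) :
    sep a (table a D c) j = s := by
  have hs : IsLeast {r | a + 1 ∈ table a D c r j} s :=
    ⟨by simp [succ_mem_table_iff, (hc.fits hj).2.1, hj, HasB],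
      fun r hr => by simpa [hj, HasB] using (succ_mem_table_iff.mp hr).2⟩
  exact hs.csInf_eq

theorem Admissible.botA_table (hc : Admissible D c) (hj : c j = mixed b s) :
    botA a (table a D c) j = b := by
  have hb : IsGreatest {r | a ∈ table a D c r j} b :=
    ⟨by simp [self_mem_table_iff, (hc.fits hj).1, hj, HasA],
      fun r hr => by simpa [hj, HasA] using (self_mem_table_iff.mp hr).2⟩
  exact hb.csSup_eq

-- `q` is `s` for the move (M1) and `b` for the move (2M), and `i` is the old column of the state.
theorem ite_table_eq_fill {i q : ℕ} (hi : c i = mixed b s) (hqi : (q, i) ∈ D) (hbq : b ≤ q)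
    (hqs : q ≤ s) (hsb : s ≤ b + 1) :
    (if r < q then {a} else if r = q then table a D c r i else {a + 1}) =
      (mixed b s).fill a r := by
  rcases lt_trichotomy r q with hr | rfl | hr
  · rw [if_pos hr, fill_mixed_of_lt hsb (hr.trans_le hqs)]
  · simp [table, hqi, hi]
  · rw [if_neg hr.not_gt, if_neg hr.ne', fill_mixed_of_gt hsb (hbq.trans_lt hr)]

theorem table_comp_swap_apply :
    table a D (c ∘ Equiv.swap k (k + 1)) r j =
      if j = k then if (r, k) ∈ D then (c (k + 1)).fill a r else ∅
      else if j = k + 1 then if (r, k + 1) ∈ D then (c k).fill a r else ∅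
      else table a D c r j := by
  simp only [table, Function.comp_apply, Equiv.swap_apply_def]
  grind

theorem resFun_table (hD : D.OrdConnected) (hc : Admissible D c) (hk : IsDescent D c k) :
    resFun a (table a D c) k = table a D (c ∘ Equiv.swap k (k + 1)) := by
  obtain ⟨r₀, hr₀, hr₀', -⟩ := id hk
  funext r j
  rw [table_comp_swap_apply, resFun]
  simp only [hc.table_nonempty_iff, hc.table_image_const]
  obtain ⟨hx, hy⟩ | ⟨b, s, hx, hy, -⟩ | ⟨b, s, hx, hy, -⟩ := hk.cases hD hc
  · have hB : ColPureB a (table a D c) k := colPureB_table hr₀ hx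
    have hA : ColPureA a (table a D c) (k + 1) := colPureA_table hr₀' hy
    rw [if_neg fun h => hB.2 h.1.1, if_neg fun h => hA.2 h.2.2, if_pos ⟨hB, hA⟩]
    simp only [hx, hy, fill_pureA, fill_pureB]
    grind
  · have hB : ColPureB a (table a D c) k := colPureB_table hr₀ hx
    obtain ⟨hb, -, hbs, hsb⟩ := hc.fits hy
    rw [if_neg fun h => hB.2 h.1.1, if_pos ⟨hB, hc.colMixed_table hy⟩, hc.botA_table hy,
      ite_table_eq_fill hy hb le_rfl hbs hsb]
    simp only [hx, hy, fill_pureB]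
    grind
  · obtain ⟨-, hs, hbs, hsb⟩ := hc.fits hx
    rw [if_pos ⟨hc.colMixed_table hx, colPureA_table hr₀' hy⟩, hc.sep_table hx,
      ite_table_eq_fill hx hs hbs le_rfl hsb]
    simp only [hx, hy, fill_pureA]
    grind

theorem StateStep.resStep_table {d : ℕ → ColState} (hD : D.OrdConnected) (h : StateStep D c d) :
    ResStep a (table a D c) (table a D d) := by
  obtain ⟨hc, k, hk, rfl⟩ := h
  exact ⟨k, descent_table_iff.mpr hk, (resFun_table hD hc hk).symm⟩

theorem Admissible.exists_of_reflTransGen_resStep (hD : D.OrdConnected) (hc : Admissible D c)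
    {S : ℕ → ℕ → Finset ℕ} (h : Relation.ReflTransGen (ResStep a) (table a D c) S) :
    ∃ d, Relation.ReflTransGen (StateStep D) c d ∧ S = table a D d := by
  induction h with
  | refl => exact ⟨c, .refl, rfl⟩
  | tail _ hstep ih =>
    obtain ⟨d, hcd, rfl⟩ := ih
    obtain ⟨k, hk, rfl⟩ := hstep
    have hd : Admissible D d := hc.of_reflTransGen hD hcd
    have hk' : IsDescent D d k := descent_table_iff.mp hk
    exact ⟨_, hcd.tail ⟨hd, k, hk', rfl⟩, resFun_table hD hd hk'⟩

theorem Admissible.forall_not_stateStep_iff (hc : Admissible D c) :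
    (∀ d, ¬ StateStep D c d) ↔ ∀ k, ¬ Descent a (table a D c) k := by
  simp only [descent_table_iff]
  exact ⟨fun h k hk => h _ ⟨hc, k, hk, rfl⟩, fun h d ⟨_, k, hk, _⟩ => h k hk⟩

end Table

/-- A table of shape `D` (a set of boxes `(row, column)`): every box of `D` is filled with a
nonempty subset of `{a, a + 1}`, columns weakly increase, and boxes outside `D` are empty. This is
`Is12SVTable` for arbitrary shapes and letters. -/
structure IsTwoLetterTable (a : ℕ) (D : Set (ℕ × ℕ)) (T : ℕ → ℕ → Finset ℕ) : Prop where
  eq_empty : ∀ i j, (i, j) ∉ D → T i j = ∅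
  nonempty : ∀ i j, (i, j) ∈ D → (T i j).Nonempty
  subset : ∀ i j, (i, j) ∈ D → T i j ⊆ {a, a + 1}
  le_succ : ∀ i j, (i, j) ∈ D → (i + 1, j) ∈ D → FinsetLE (T i j) (T (i + 1) j)

/-- `Benign` for tables in the letters `a` and `a + 1`. -/
def IsBenign (a : ℕ) (T : ℕ → ℕ → Finset ℕ) : Prop :=
  ∀ k k', k < k' → ColMixed a T k → ColMixed a T k' →
    (∀ m, k < m → m < k' → ¬ ColMixed a T m) →
    sep a T k' ≤ sep a T k ∧ ((∃ i, T i k' = {a, a + 1}) → sep a T k' < sep a T k)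

/-- The state of column `j` of `T`; an empty column is given the state `pureB`. -/
noncomputable def colState (a : ℕ) (T : ℕ → ℕ → Finset ℕ) (j : ℕ) : ColState :=
  if ColMixed a T j then mixed (botA a T j) (sep a T j)
  else if ColHas T j a then pureA
  else pureB

theorem colState_eq_mixed_iff {a : ℕ} {T : ℕ → ℕ → Finset ℕ} {j b s : ℕ} :
    colState a T j = mixed b s ↔ ColMixed a T j ∧ botA a T j = b ∧ sep a T j = s := by
  unfold colState
  split_ifs <;> simp [*]

theorem sep_mem_of_colMixed {a : ℕ} {T : ℕ → ℕ → Finset ℕ} {j : ℕ} (hj : ColMixed a T j) :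
    a + 1 ∈ T (sep a T j) j :=
  Nat.sInf_mem hj.2

theorem Admissible.isTwoLetterTable {a : ℕ} {D : Set (ℕ × ℕ)} {c : ℕ → ColState}
    (hc : Admissible D c) : IsTwoLetterTable a D (table a D c) where
  eq_empty i j h := if_neg h
  nonempty i j h := hc.table_nonempty_iff.mpr h
  subset i j _ x hx := by
    rcases (mem_table_iff.mp hx).2 with ⟨rfl, -⟩ | ⟨rfl, -⟩ <;> simp
  le_succ i j _ _ x hx y hy := by
    rcases (mem_table_iff.mp hx).2 with ⟨rfl, -⟩ | ⟨rfl, hB⟩ <;>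
      rcases (mem_table_iff.mp hy).2 with ⟨rfl, hA⟩ | ⟨rfl, -⟩ <;> try omega
    rcases hj : c j with _ | _ | ⟨b, s⟩ <;> simp only [hj, HasA, HasB] at hA hB
    have := (hc.fits hj).2.2.1
    omega

namespace IsTwoLetterTable

variable {a : ℕ} {D : Set (ℕ × ℕ)} {T : ℕ → ℕ → Finset ℕ} {i j k x y : ℕ}

theorem mem_shape (hT : IsTwoLetterTable a D T) (hx : x ∈ T i j) : (i, j) ∈ D := by
  by_contra h
  simp [hT.eq_empty i j h] at hx

theorem eq_or_eq (hT : IsTwoLetterTable a D T) (hx : x ∈ T i j) : x = a ∨ x = a + 1 := by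
  simpa using hT.subset i j (hT.mem_shape hx) hx

theorem mem_or_mem (hT : IsTwoLetterTable a D T) (h : (i, j) ∈ D) :
    a ∈ T i j ∨ a + 1 ∈ T i j := by
  obtain ⟨x, hx⟩ := hT.nonempty i j h
  rcases hT.eq_or_eq hx with rfl | rfl <;> simp [hx]

theorem le_of_mem_of_mem (hD : D.OrdConnected) (hT : IsTwoLetterTable a D T) (hik : i < k)
    (hx : x ∈ T i j) (hy : y ∈ T k j) : x ≤ y := by
  induction k, hik using Nat.le_induction generalizing y with
  | base => exact hT.le_succ i j (hT.mem_shape hx) (hT.mem_shape hy) x hx y hy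
  | succ k hik ih =>
    have hk : (k, j) ∈ D := hD.out (hT.mem_shape hx) (hT.mem_shape hy)
      ⟨⟨i.le_succ.trans hik, le_rfl⟩, ⟨k.le_succ, le_rfl⟩⟩
    obtain ⟨z, hz⟩ := hT.nonempty k j hk
    exact (ih hz).trans (hT.le_succ k j hk (hT.mem_shape hy) z hz y hy)

theorem row_le_row (hD : D.OrdConnected) (hT : IsTwoLetterTable a D T)
    (hi : a ∈ T i j) (hk : a + 1 ∈ T k j) : i ≤ k :=
  le_of_not_gt fun h => (hT.le_of_mem_of_mem hD h hk hi).not_gt a.lt_succ_self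

theorem bddAbove_rows (hD : D.OrdConnected) (hT : IsTwoLetterTable a D T) (hj : ColMixed a T j) :
    BddAbove {r | a ∈ T r j} :=
  ⟨_, fun _ hr => hT.row_le_row hD hr hj.2.choose_spec⟩

theorem botA_mem (hD : D.OrdConnected) (hT : IsTwoLetterTable a D T) (hj : ColMixed a T j) :
    a ∈ T (botA a T j) j :=
  Nat.sSup_mem hj.1 (hT.bddAbove_rows hD hj)

theorem mem_iff_le_botA (hD : D.OrdConnected) (hT : IsTwoLetterTable a D T)
    (hj : ColMixed a T j) : a ∈ T i j ↔ (i, j) ∈ D ∧ i ≤ botA a T j := by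
  refine ⟨fun h => ⟨hT.mem_shape h, le_csSup (hT.bddAbove_rows hD hj) h⟩, fun ⟨h, hi⟩ => ?_⟩
  refine (hT.mem_or_mem h).elim id fun h' => ?_
  exact (hi.antisymm (hT.row_le_row hD (hT.botA_mem hD hj) h')) ▸ hT.botA_mem hD hj

theorem succ_mem_iff_sep_le (hD : D.OrdConnected) (hT : IsTwoLetterTable a D T)
    (hj : ColMixed a T j) : a + 1 ∈ T i j ↔ (i, j) ∈ D ∧ sep a T j ≤ i := by
  refine ⟨fun h => ⟨hT.mem_shape h, Nat.sInf_le h⟩, fun ⟨h, hi⟩ => ?_⟩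
  refine (hT.mem_or_mem h).elim (fun h' => ?_) id
  exact (hi.antisymm (hT.row_le_row hD h' (sep_mem_of_colMixed hj))) ▸ sep_mem_of_colMixed hj

theorem botA_le_sep (hD : D.OrdConnected) (hT : IsTwoLetterTable a D T) (hj : ColMixed a T j) :
    botA a T j ≤ sep a T j :=
  hT.row_le_row hD (hT.botA_mem hD hj) (sep_mem_of_colMixed hj)

theorem sep_le_botA_succ (hD : D.OrdConnected) (hT : IsTwoLetterTable a D T)
    (hj : ColMixed a T j) : sep a T j ≤ botA a T j + 1 := by
  by_contra! h
  have hmem : (botA a T j + 1, j) ∈ D :=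
    hD.out (hT.mem_shape (hT.botA_mem hD hj)) (hT.mem_shape (sep_mem_of_colMixed hj))
      ⟨⟨Nat.le_succ _, le_rfl⟩, ⟨h.le, le_rfl⟩⟩
  rcases hT.mem_or_mem hmem with h' | h'
  · exact (((hT.mem_iff_le_botA hD hj).mp h').2).not_gt (Nat.lt_succ_self _)
  · exact (((hT.succ_mem_iff_sep_le hD hj).mp h').2).not_gt h

theorem table_colState (hD : D.OrdConnected) (hT : IsTwoLetterTable a D T) :
    table a D (colState a T) = T := by
  have hletters (r j : ℕ) : (a ∈ T r j ↔ (r, j) ∈ D ∧ (colState a T j).HasA r) ∧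
      (a + 1 ∈ T r j ↔ (r, j) ∈ D ∧ (colState a T j).HasB r) := by
    unfold colState
    split_ifs with hmixed hA
    · exact ⟨hT.mem_iff_le_botA hD hmixed, hT.succ_mem_iff_sep_le hD hmixed⟩
    · have hB : a + 1 ∉ T r j := fun h => hmixed ⟨hA, r, h⟩
      simpa [HasA, HasB, hB] using
        ⟨hT.mem_shape, fun h => (hT.mem_or_mem h).resolve_right hB⟩
    · have hA' : a ∉ T r j := fun h => hA ⟨r, h⟩
      simpa [HasA, HasB, hA'] using
        ⟨hT.mem_shape, fun h => (hT.mem_or_mem h).resolve_left hA'⟩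
  ext r j x
  rw [mem_table_iff]
  have := hletters r j
  have := @hT.eq_or_eq (x := x) (i := r) (j := j)
  grind

theorem botA_lt_sep (hD : D.OrdConnected) (hT : IsTwoLetterTable a D T) (hB : IsBenign a T)
    (hjk : j < k) (hj : ColMixed a T j) (hk : ColMixed a T k) : botA a T k < sep a T j := by
  refine rel_of_consecutive (P := ColMixed a T) (R := fun j k => botA a T k < sep a T j)
    (fun i j k hj hij hjk => ?_) (fun j k hjk hj hk hcons => ?_) hjk hj hk
  · exact hjk.trans_le ((hT.sep_le_botA_succ hD hj).trans hij)
  · obtain ⟨hle, hlt⟩ := hB j k hjk hj hk hcons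
    rcases (hT.botA_le_sep hD hk).lt_or_eq with h | h
    · exact h.trans_le hle
    · have hsep : a + 1 ∈ T (sep a T k) k := sep_mem_of_colMixed hk
      refine h ▸ hlt ⟨sep a T k, (hT.subset _ _ (hT.mem_shape hsep)).antisymm ?_⟩
      simpa [Finset.insert_subset_iff, hsep] using h ▸ hT.botA_mem hD hk

theorem admissible_colState (hD : D.OrdConnected) (hT : IsTwoLetterTable a D T)
    (hB : IsBenign a T) : Admissible D (colState a T) where
  fits j b s hj := by
    obtain ⟨hmixed, rfl, rfl⟩ := colState_eq_mixed_iff.mp hj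
    exact ⟨hT.mem_shape (hT.botA_mem hD hmixed), hT.mem_shape (sep_mem_of_colMixed hmixed),
      hT.botA_le_sep hD hmixed, hT.sep_le_botA_succ hD hmixed⟩
  lt k k' hkk' b s b' s' hk hk' := by
    obtain ⟨hmixed, -, rfl⟩ := colState_eq_mixed_iff.mp hk
    obtain ⟨hmixed', rfl, -⟩ := colState_eq_mixed_iff.mp hk'
    exact hT.botA_lt_sep hD hB hkk' hmixed hmixed'

end IsTwoLetterTable

end TwoLetterTables

theorem resolution_unique_normal_form_general (a : ℕ) {D : Set (ℕ × ℕ)} (hD : D.OrdConnected)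
    (hbdd : BddAbove (Prod.snd '' D)) {T : ℕ → ℕ → Finset ℕ} (hT : IsTwoLetterTable a D T)
    (hB : IsBenign a T) :
    ∃! N : ℕ → ℕ → Finset ℕ, IsTwoLetterTable a D N ∧ (∀ k, ¬ Descent a N k) ∧
      Relation.ReflTransGen (ResStep a) T N := by
  obtain ⟨c, hc, rfl⟩ : ∃ c, Admissible D c ∧ table a D c = T :=
    ⟨colState a T, hT.admissible_colState hD hB, hT.table_colState hD⟩
  obtain ⟨n, ⟨hcn, hn⟩, hunique⟩ :=
    existsUnique_normalForm (wellFounded_stateStep hD hbdd) (stateStep_locally_confluent hD) c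
  have hn' : Admissible D n := hc.of_reflTransGen hD hcn
  refine ⟨table a D n, ⟨hn'.isTwoLetterTable, hn'.forall_not_stateStep_iff.mp hn,
    hcn.lift (table a D) fun _ _ h => h.resStep_table hD⟩, fun N ⟨_, hN, hTN⟩ => ?_⟩
  obtain ⟨d, hcd, rfl⟩ := hc.exists_of_reflTransGen_resStep hD hTN
  have hd : Admissible D d := hc.of_reflTransGen hD hcd
  rw [hunique d ⟨hcd, hd.forall_not_stateStep_iff.mpr hN⟩]

/-- The set of boxes of the skew shape `lam/mu`. -/
def skewShape (lam mu : ℕ → ℕ) : Set (ℕ × ℕ) := {p | InShape lam mu p.1 p.2}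

section SkewShape

variable {lam mu : ℕ → ℕ}

theorem ordConnected_skewShape (hlam : Antitone lam) (hmu : Antitone mu) :
    (skewShape lam mu).OrdConnected :=
  ⟨fun _ hp _ hq _ ⟨hpx, hxq⟩ => ⟨(hmu hpx.1).trans (hp.1.trans hpx.2),
    hxq.2.trans_lt (hq.2.trans_le (hlam hxq.1))⟩⟩

theorem bddAbove_columns_skewShape (hlam : Antitone lam) :
    BddAbove (Prod.snd '' skewShape lam mu) := by
  refine ⟨lam 0, ?_⟩
  rintro _ ⟨p, hp, rfl⟩
  exact hp.2.le.trans (hlam (Nat.zero_le _))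

theorem is12SVTable_iff {T : ℕ → ℕ → Finset ℕ} :
    Is12SVTable lam mu T ↔ IsTwoLetterTable 1 (skewShape lam mu) T :=
  ⟨fun ⟨h₀, h₁, h₂⟩ => ⟨h₀, fun i j h => (h₁ i j h).1, fun i j h => (h₁ i j h).2, h₂⟩,
    fun h => ⟨h.eq_empty, fun i j hij => ⟨h.nonempty i j hij, h.subset i j hij⟩, h.le_succ⟩⟩

end SkewShape

/-- For every benign 12-SV table `T` of shape `lam/mu` there is a unique
descent-free 12-SV table `N` of shape `lam/mu` (i.e. `N ∈ SVRPP^{12}(lam/mu)`) with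
`T →* N` under descent resolution. -/
theorem resolution_unique_normal_form (lam mu : ℕ → ℕ)
    (hlam : IsPartitionFun lam) (hmu : IsPartitionFun mu) (hsub : ∀ r, mu r ≤ lam r)
    (T : ℕ → ℕ → Finset ℕ) (hT : Is12SVTable lam mu T) (hB : Benign T) :
    ∃! N : ℕ → ℕ → Finset ℕ,
      Is12SVTable lam mu N ∧ (∀ k, ¬ Descent 1 N k) ∧
      Relation.ReflTransGen (ResStep 1) T N := by
  have hlam' : Antitone lam := antitone_nat_of_succ_le hlam.1
  have hmu' : Antitone mu := antitone_nat_of_succ_le hmu.1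
  simpa only [is12SVTable_iff] using resolution_unique_normal_form_general 1
    (ordConnected_skewShape hlam' hmu') (bddAbove_columns_skewShape hlam')
    (is12SVTable_iff.mp hT) hB
end

section
/- Let T ∈ SVRPP^n(λ/μ) and 1 ≤ i < n, and let T^{(i)} be the subtableau of T occupied by the letters i and i+1. Then the subsequence of the reading word read(T) formed by the letters i and i+1 is equal to read(T^{(i)}). -/
open scoped Classical

/-! ### Crystal operators on set-valued reverse plane partitions -/

/-- The restriction `T^{(i)}` of a filling to the letters `i` and `i+1`: each box keeps
its intersection with `{i, i+1}`. -/
def restrictTwo (i : ℕ) (T : ℕ → ℕ → Finset ℕ) : ℕ → ℕ → Finset ℕ :=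
  fun r j => (T r j).filter (fun x => x = i ∨ x = i + 1)

/-- The complement of `T^{(i)}` inside `T`: each box keeps its letters other than
`i` and `i+1`. -/
def eraseTwo (i : ℕ) (T : ℕ → ℕ → Finset ℕ) : ℕ → ℕ → Finset ℕ :=
  fun r j => (T r j).filter (fun x => ¬ (x = i ∨ x = i + 1))

/-- Recombine a filling `T` with a new `{i, i+1}`-part `S`. -/
def mergeTwo (i : ℕ) (T S : ℕ → ℕ → Finset ℕ) : ℕ → ℕ → Finset ℕ :=
  fun r j => eraseTwo i T r j ∪ S r j

/-- In column `A`, replace every letter `i+1` by `i`. -/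
def raiseCol (i A : ℕ) (S : ℕ → ℕ → Finset ℕ) : ℕ → ℕ → Finset ℕ :=
  fun r j => if j = A then (S r j).image (fun x => if x = i + 1 then i else x) else S r j

/-- In column `A`, replace every letter `i` by `i+1`. -/
def lowerCol (i A : ℕ) (S : ℕ → ℕ → Finset ℕ) : ℕ → ℕ → Finset ℕ :=
  fun r j => if j = A then (S r j).image (fun x => if x = i then i + 1 else x) else S r j

/-- Suffix statistic of the `i`-signature: the number of `(i+1)`-pure columns `≥ p` minus
the number of `i`-pure columns `≥ p` (of `T^{(i)}`). -/
noncomputable def fsuffix (i : ℕ) (T : ℕ → ℕ → Finset ℕ) (p : ℕ) : ℤ :=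
  (Set.ncard {j : ℕ | p ≤ j ∧ ColPureB i (restrictTwo i T) j} : ℤ) -
  (Set.ncard {j : ℕ | p ≤ j ∧ ColPureA i (restrictTwo i T) j} : ℤ)

/-- Prefix statistic of the `i`-signature: the number of `i`-pure columns `≤ p` minus the
number of `(i+1)`-pure columns `≤ p` (of `T^{(i)}`). -/
noncomputable def gprefix (i : ℕ) (T : ℕ → ℕ → Finset ℕ) (p : ℕ) : ℤ :=
  (Set.ncard {j : ℕ | j ≤ p ∧ ColPureA i (restrictTwo i T) j} : ℤ) -
  (Set.ncard {j : ℕ | j ≤ p ∧ ColPureB i (restrictTwo i T) j} : ℤ)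

/-- Column `A` carries the leftmost uncancelled `−` of the reduced `i`-signature of `T`:
it is `(i+1)`-pure and is the largest maximizer of the suffix statistic. -/
def LeftmostUnpairedMinus (i : ℕ) (T : ℕ → ℕ → Finset ℕ) (A : ℕ) : Prop :=
  ColPureB i (restrictTwo i T) A ∧
  (∀ p, fsuffix i T p ≤ fsuffix i T A) ∧
  (∀ p, A < p → fsuffix i T p < fsuffix i T A)

/-- Column `A` carries the rightmost uncancelled `+` of the reduced `i`-signature of `T`:
it is `i`-pure and is the smallest maximizer of the prefix statistic. -/
def RightmostUnpairedPlus (i : ℕ) (T : ℕ → ℕ → Finset ℕ) (A : ℕ) : Prop :=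
  ColPureA i (restrictTwo i T) A ∧
  (∀ p, gprefix i T p ≤ gprefix i T A) ∧
  (∀ p, p < A → gprefix i T p < gprefix i T A)

/-- `ERel i T T'` : `T'` is obtained from `T` by the raising operator `e_i`: change all
`(i+1)`'s to `i`'s in the column of the leftmost uncancelled `−`, run the
descent-resolution algorithm on the `{i, i+1}`-part until no descent remains, and merge
the result back into `T`. -/
def ERel (i : ℕ) (T T' : ℕ → ℕ → Finset ℕ) : Prop :=
  ∃ A S', LeftmostUnpairedMinus i T A ∧
    Relation.ReflTransGen (ResStep i) (raiseCol i A (restrictTwo i T)) S' ∧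
    (∀ k, ¬ Descent i S' k) ∧
    T' = mergeTwo i T S'

/-- `FRel i T T'` : `T'` is obtained from `T` by the lowering operator `f_i`. -/
def FRel (i : ℕ) (T T' : ℕ → ℕ → Finset ℕ) : Prop :=
  ∃ A S', RightmostUnpairedPlus i T A ∧
    Relation.ReflTransGen (ResStep i) (lowerCol i A (restrictTwo i T)) S' ∧
    (∀ k, ¬ Descent i S' k) ∧
    T' = mergeTwo i T S'

/-- The raising crystal operator `e_i` (with value `none` playing the role of `0`). -/
noncomputable def eOp (i : ℕ) (T : ℕ → ℕ → Finset ℕ) : Option (ℕ → ℕ → Finset ℕ) :=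
  if h : ∃ T', ERel i T T' then some h.choose else none

/-- The lowering crystal operator `f_i` (with value `none` playing the role of `0`). -/
noncomputable def fOp (i : ℕ) (T : ℕ → ℕ → Finset ℕ) : Option (ℕ → ℕ → Finset ℕ) :=
  if h : ∃ T', FRel i T T' then some h.choose else none

/-! ### Reading words -/

/-- The contribution of row `r` to the reading word of `T` (columns bounded by `C`; empty
boxes are skipped). First the non-pivot entries are read from right to left, within each
box from largest to smallest; then the pivots (minima of boxes) are read from left to
right, omitting every pivot equal to the maximum entry of the (nonempty) box directly
above it. -/
noncomputable def rowRead (C : ℕ) (T : ℕ → ℕ → Finset ℕ) (r : ℕ) : List ℕ :=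
  (((List.range C).reverse).flatMap
      (fun j => ((T r j).sort (· ≤ ·)).tail.reverse)) ++
  ((List.range C).filterMap
      (fun j =>
        if h : (T r j).Nonempty then
          (if r ≠ 0 ∧ (T r j).min' h ∈ T (r - 1) j ∧
              (∀ x ∈ T (r - 1) j, x ≤ (T r j).min' h)
           then none else some ((T r j).min' h))
        else none))

/-- The reading word of `T`: rows are read from bottom (row `R - 1`) to top (row `0`). -/
noncomputable def readWord (R C : ℕ) (T : ℕ → ℕ → Finset ℕ) : List ℕ :=
  ((List.range R).reverse).flatMap (fun r => rowRead C T r)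

/-- The height vector of `T`: the sequence of (0-indexed) row indices of the letters of
the reading word. -/
noncomputable def heightWord (R C : ℕ) (T : ℕ → ℕ → Finset ℕ) : List ℕ :=
  ((List.range R).reverse).flatMap (fun r => (rowRead C T r).map (fun _ => r))

/-- A word is a reverse lattice (Yamanouchi) word if every suffix contains at least as
many `a`'s as `b`'s whenever `a < b` (for positive letters). -/
def IsReverseLatticeWord (w : List ℕ) : Prop :=
  ∀ k a b, 1 ≤ a → a < b → (w.drop k).count b ≤ (w.drop k).count a

/-!
Sweep row `r` from left to right: appending box `k` puts its non-pivots in front of the word of the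
row read so far and its pivot behind it. So restricting the letters to an interval commutes with
reading, unless the pivot of box `k` is discarded while some other letter `x` of the box survives.
In that case the smallest surviving letter turns from a non-pivot into a pivot, and moves from the
front of the word to its end. But then the discarded pivot lies below the interval and bounds the
boxes to the left, so the word in between contains no surviving letter and the move is invisible.
The new pivot is not omitted either, because it exceeds all letters of the box above.
-/

section FinsetSort

variable {α : Type*}

theorem sort_filter (s : Finset α) (r : α → α → Prop) [DecidableRel r] [IsTrans α r]
    [Std.Antisymm r] [Std.Total r] (p : α → Prop) [DecidablePred p] :
    (s.filter p).sort r = (s.sort r).filter p := by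
  refine List.Perm.eq_of_pairwise' (Finset.pairwise_sort _ _)
    ((Finset.pairwise_sort _ _).filter _) ?_
  rw [List.perm_ext_iff_of_nodup (Finset.sort_nodup _ _) ((Finset.sort_nodup _ _).filter _)]
  simp

variable [LinearOrder α] {s : Finset α} {p : α → Prop} [DecidablePred p]

theorem sort_eq_min'_cons_tail (hs : s.Nonempty) : s.sort = s.min' hs :: s.sort.tail := by
  have hsort : s.sort ≠ [] := by
    simpa [← List.length_pos_iff, Finset.card_pos] using hs
  rw [Finset.min'_eq_sorted_zero, ← List.head_eq_getElem hsort, List.cons_head_tail]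

theorem tail_sort_filter_of_min' (hs : s.Nonempty) (hp : p (s.min' hs)) :
    (s.filter p).sort.tail = s.sort.tail.filter p := by
  rw [sort_filter, sort_eq_min'_cons_tail hs, List.filter_cons_of_pos (by simpa using hp),
    List.tail_cons, List.tail_cons]

theorem sort_filter_of_not_min' (hs : s.Nonempty) (hp : ¬ p (s.min' hs)) :
    (s.filter p).sort = s.sort.tail.filter p := by
  rw [sort_filter, sort_eq_min'_cons_tail hs, List.filter_cons_of_neg (by simpa using hp),
    List.tail_cons]

theorem min'_filter_of_min' (hs : s.Nonempty) (hp : p (s.min' hs)) (hf : (s.filter p).Nonempty) :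
    (s.filter p).min' hf = s.min' hs :=
  le_antisymm (Finset.min'_le _ _ (Finset.mem_filter.2 ⟨s.min'_mem hs, hp⟩))
    (Finset.min'_subset hf (Finset.filter_subset p s))

end FinsetSort

/-- The word of the non-pivot entries of a box with filling `B`, from largest to smallest. -/
def nonPivots (B : Finset ℕ) : List ℕ :=
  B.sort.tail.reverse

/-- The pivot of a box with filling `B` as it enters the reading word: `none` if the box is empty
or its pivot equals the maximum of the filling `A` of the box above. An absent box above is encoded
by `A = ∅`. -/
noncomputable def readPivot (A B : Finset ℕ) : Option ℕ :=
  if h : B.Nonempty then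
    if B.min' h ∈ A ∧ ∀ x ∈ A, x ≤ B.min' h then none else some (B.min' h)
  else none

/-- The filling of the box directly above `(r, j)`, taken to be empty if `r = 0`. -/
def boxAbove (T : ℕ → ℕ → Finset ℕ) : ℕ → ℕ → Finset ℕ
  | 0, _ => ∅
  | r + 1, j => T r j

/-- The restriction of a filling to the letters satisfying `p`; `restrictTwo i` is the case
`p x ↔ x = i ∨ x = i + 1`. -/
def restrictLetters (p : ℕ → Prop) [DecidablePred p] (T : ℕ → ℕ → Finset ℕ) :
    ℕ → ℕ → Finset ℕ :=
  fun r j => (T r j).filter p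

section Box

variable {A B : Finset ℕ} {p : ℕ → Prop} [DecidablePred p]

theorem readPivot_eq_ite (hAB : FinsetLE A B) (hB : B.Nonempty) :
    readPivot A B = if B.min' hB ∈ A then none else some (B.min' hB) := by
  have hmax : ∀ x ∈ A, x ≤ B.min' hB := fun x hx => hAB x hx _ (B.min'_mem hB)
  simp only [readPivot, dif_pos hB, and_iff_left hmax]

theorem filter_readPivot_of_not_min' (hB : B.Nonempty) (hp : ¬ p (B.min' hB)) :
    (readPivot A B).toList.filter p = [] := by
  rw [readPivot, dif_pos hB]
  split_ifs <;> simp [hp]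

theorem FinsetLE.filter (hAB : FinsetLE A B) : FinsetLE (A.filter p) (B.filter p) :=
  fun a ha b hb => hAB a (Finset.mem_of_mem_filter a ha) b (Finset.mem_of_mem_filter b hb)

theorem readPivot_filter_of_min' (hAB : FinsetLE A B) (hB : B.Nonempty) (hp : p (B.min' hB)) :
    (readPivot (A.filter p) (B.filter p)).toList = (readPivot A B).toList.filter p := by
  have hf : (B.filter p).Nonempty := ⟨_, Finset.mem_filter.2 ⟨B.min'_mem hB, hp⟩⟩
  rw [readPivot_eq_ite hAB.filter hf, readPivot_eq_ite hAB hB, min'_filter_of_min' hB hp hf]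
  by_cases hA : B.min' hB ∈ A <;> simp [hA, hp]

theorem readPivot_filter_of_not_min' (hAB : FinsetLE A B) (hB : B.Nonempty)
    (hp : ¬ p (B.min' hB)) (hf : (B.filter p).Nonempty) :
    readPivot (A.filter p) (B.filter p) = some ((B.filter p).min' hf) := by
  obtain ⟨hmem, hpf⟩ := Finset.mem_filter.1 ((B.filter p).min'_mem hf)
  have hlt : B.min' hB < (B.filter p).min' hf :=
    lt_of_le_of_ne (B.min'_le _ hmem) fun h => hp (h ▸ hpf)
  rw [readPivot_eq_ite hAB.filter hf, if_neg]
  intro hA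
  exact hlt.not_ge (hAB _ (Finset.mem_of_mem_filter _ hA) _ (B.min'_mem hB))

theorem filter_nonPivots_append_readPivot_of_not_min' (hAB : FinsetLE A B) (hB : B.Nonempty)
    (hp : ¬ p (B.min' hB)) (hf : (B.filter p).Nonempty) :
    nonPivots (B.filter p) ++ (readPivot (A.filter p) (B.filter p)).toList =
      (nonPivots B).filter p ++ (readPivot A B).toList.filter p := by
  rw [filter_readPivot_of_not_min' hB hp, readPivot_filter_of_not_min' hAB hB hp hf,
    List.append_nil, Option.toList_some]
  simp only [nonPivots]
  rw [List.filter_reverse, ← sort_filter_of_not_min' hB hp, sort_eq_min'_cons_tail hf,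
    List.tail_cons, List.reverse_cons]

theorem filter_eq_empty_of_finsetLE_of_not_min' (hconv : {x | p x}.OrdConnected)
    (hAB : FinsetLE A B) (hB : B.Nonempty) (hp : ¬ p (B.min' hB)) (hf : (B.filter p).Nonempty) :
    A.filter p = ∅ := by
  obtain ⟨x, hx⟩ := hf
  obtain ⟨hxB, hpx⟩ := Finset.mem_filter.1 hx
  refine Finset.filter_eq_empty_iff.2 fun a ha hpa => hp ?_
  exact hconv.out hpa hpx ⟨hAB a ha _ (B.min'_mem hB), B.min'_le x hxB⟩

end Box

section Row

variable {T : ℕ → ℕ → Finset ℕ} {r : ℕ} {p : ℕ → Prop} [DecidablePred p]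

theorem boxAbove_restrictLetters (j : ℕ) :
    boxAbove (restrictLetters p T) r j = (boxAbove T r j).filter p := by
  cases r with
  | zero => exact (Finset.filter_empty p).symm
  | succ r => rfl

theorem finsetLE_boxAbove {j : ℕ} (hcol : ∀ r, FinsetLE (T r j) (T (r + 1) j)) :
    FinsetLE (boxAbove T r j) (T r j) := by
  cases r with
  | zero => simp [boxAbove, FinsetLE]
  | succ r => exact hcol r

theorem rowRead_eq_append (C : ℕ) : rowRead C T r =
    (List.range C).reverse.flatMap (fun j => nonPivots (T r j)) ++
      (List.range C).filterMap (fun j => readPivot (boxAbove T r j) (T r j)) := by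
  cases r <;> simp [rowRead, nonPivots, readPivot, boxAbove]

theorem rowRead_succ (C : ℕ) : rowRead (C + 1) T r =
    nonPivots (T r C) ++ rowRead C T r ++ (readPivot (boxAbove T r C) (T r C)).toList := by
  have hpivot : [C].filterMap (fun j => readPivot (boxAbove T r j) (T r j)) =
      (readPivot (boxAbove T r C) (T r C)).toList := by
    cases h : readPivot (boxAbove T r C) (T r C) <;> simp [h]
  simp only [rowRead_eq_append, List.range_succ, List.reverse_append, List.reverse_singleton,
    List.flatMap_append, List.flatMap_singleton, List.filterMap_append, hpivot, List.append_assoc]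

theorem rowRead_eq_nil {C : ℕ} (hT : ∀ j < C, T r j = ∅) : rowRead C T r = [] := by
  induction C with
  | zero => rfl
  | succ C ih =>
    rw [rowRead_succ, hT C C.lt_succ_self, ih fun j hj => hT j (hj.trans C.lt_succ_self)]
    simp [nonPivots, readPivot]

theorem rowRead_restrictLetters (hconv : {x | p x}.OrdConnected)
    (hrow : ∀ j k, j < k → FinsetLE (T r j) (T r k))
    (hcol : ∀ r j, FinsetLE (T r j) (T (r + 1) j)) (C : ℕ) :
    rowRead C (restrictLetters p T) r = (rowRead C T r).filter p := by
  induction C with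
  | zero => rfl
  | succ C ih =>
    have hAB : FinsetLE (boxAbove T r C) (T r C) := finsetLE_boxAbove fun r => hcol r C
    have hbox : restrictLetters p T r C = (T r C).filter p := rfl
    rw [rowRead_succ, rowRead_succ, List.filter_append, List.filter_append,
      boxAbove_restrictLetters, hbox, ← ih]
    rcases (T r C).eq_empty_or_nonempty with hempty | hne
    · simp [hempty, nonPivots, readPivot]
    by_cases hp : p ((T r C).min' hne)
    · rw [readPivot_filter_of_min' hAB hne hp, nonPivots, tail_sort_filter_of_min' hne hp,
        ← List.filter_reverse, ← nonPivots]
    rcases ((T r C).filter p).eq_empty_or_nonempty with hf | hf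
    · rw [filter_readPivot_of_not_min' hne hp, nonPivots, nonPivots, List.filter_reverse,
        ← sort_filter_of_not_min' hne hp, hf]
      simp [readPivot]
    · have hnil : rowRead C (restrictLetters p T) r = [] := rowRead_eq_nil fun j hj =>
        filter_eq_empty_of_finsetLE_of_not_min' hconv (hrow j C hj) hne hp hf
      rw [hnil, List.append_nil, List.append_nil]
      exact filter_nonPivots_append_readPivot_of_not_min' hAB hne hp hf

end Row

namespace IsSVRPP

variable {lam mu : ℕ → ℕ} {T : ℕ → ℕ → Finset ℕ}

theorem inShape_of_mem (hT : IsSVRPP lam mu T) {r j x : ℕ} (hx : x ∈ T r j) :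
    InShape lam mu r j := by
  by_contra hout
  exact Finset.notMem_empty x (hT.1 r j hout ▸ hx)

theorem finsetLE_col (hT : IsSVRPP lam mu T) (r j : ℕ) : FinsetLE (T r j) (T (r + 1) j) :=
  fun a ha b hb =>
    hT.2.2.2.2 r j (hT.inShape_of_mem ha) (hT.inShape_of_mem hb) a ha b hb

theorem finsetLE_row (hT : IsSVRPP lam mu T) (r : ℕ) {j k : ℕ} (hjk : j < k) :
    FinsetLE (T r j) (T r k) := by
  obtain ⟨-, hnonempty, -, hstep, -⟩ := id hT
  induction k, hjk using Nat.le_induction with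
  | base =>
    exact fun a ha b hb => hstep r j (hT.inShape_of_mem ha) (hT.inShape_of_mem hb) a ha b hb
  | succ k hjk ih =>
    intro a ha b hb
    have hleft := hT.inShape_of_mem ha
    have hright := hT.inShape_of_mem hb
    have hmid : InShape lam mu r k := ⟨hleft.1.trans (by omega), k.lt_succ_self.trans hright.2⟩
    obtain ⟨c, hc⟩ := hnonempty r k hmid
    exact (ih a ha c hc).trans (hstep r k hmid hright c hc b hb)

end IsSVRPP

theorem ordConnected_eq_or_eq_succ (i : ℕ) : {x | x = i ∨ x = i + 1}.OrdConnected := by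
  convert Set.ordConnected_Icc (a := i) (b := i + 1) using 1
  ext x
  simp only [Set.mem_ofPred_eq, Set.mem_Icc]
  omega

theorem readWord_restrict_general {p : ℕ → Prop} [DecidablePred p]
    (hconv : {x | p x}.OrdConnected) {T : ℕ → ℕ → Finset ℕ}
    (hrow : ∀ r j k, j < k → FinsetLE (T r j) (T r k))
    (hcol : ∀ r j, FinsetLE (T r j) (T (r + 1) j)) (R C : ℕ) :
    readWord R C (restrictLetters p T) = (readWord R C T).filter p := by
  rw [readWord, readWord, List.filter_flatMap]
  exact List.flatMap_congr fun r _ => rowRead_restrictLetters hconv (hrow r) hcol C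

/-- For `T ∈ SVRPP^n(lam/mu)` and `1 ≤ i < n`, the subsequence of
`read(T)` formed by the letters `i` and `i+1` equals `read(T^{(i)})`, where `T^{(i)}` is
the restriction of `T` to the letters `i, i+1`. (`R` bounds the rows and `C` the columns
of the shape.) -/
theorem readWord_restrict (lam mu : ℕ → ℕ)
    (hlam : IsPartitionFun lam) (hmu : IsPartitionFun mu) (hsub : ∀ r, mu r ≤ lam r)
    (R C : ℕ) (hR : ∀ r, R ≤ r → lam r = 0) (hC : ∀ r, lam r ≤ C)
    (n : ℕ) (hn : 1 ≤ n) (i : ℕ) (hi1 : 1 ≤ i) (hi2 : i < n)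
    (T : ℕ → ℕ → Finset ℕ) (hT : IsSVRPPn lam mu n T) :
    readWord R C (restrictTwo i T) =
      (readWord R C T).filter (fun x => decide (x = i ∨ x = i + 1)) := by
  exact readWord_restrict_general (ordConnected_eq_or_eq_succ i)
    (fun r _ _ hjk => hT.1.finsetLE_row r hjk) hT.1.finsetLE_col R C
end
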